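/- Let N ≥ 1, let q > 2 satisfy q ≥ 1 + N/2, set q' = q/(q−1), and let T > 0. For a positive bounded Radon measure μ on ℝ^N define ‖μ‖_* = sup{ ∫_{ℝ^N} η dμ : η ∈ C_c^∞(ℝ^N), ‖η‖_{L^{q'}(ℝ^N)} + ‖η‖_{Ḃ^{2/q,q'}(ℝ^N)} ≤ 1 }. Then there exists c = c(T, q, N) > 0 such that for every positive bounded Radon measure μ on ℝ^N with ‖μ‖_* < ∞: c^{-1} ‖μ‖_* ≤ (∬_{ℝ^N×(0,T]} ℍ[μ](x,t)^q dx dt)^{1/q} ≤ c ‖μ‖_*. -/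

import Mathlib

open MeasureTheory Real Set Filter Metric

noncomputable section

abbrev Euc (N : ℕ) := EuclideanSpace ℝ (Fin N)

/-- Spatial Laplacian of `f : ℝ^N → ℝ`. -/
def lapl {N : ℕ} (f : Euc N → ℝ) (x : Euc N) : ℝ :=
  ∑ i : Fin N,
    fderiv ℝ (fun y => fderiv ℝ f y (EuclideanSpace.single i 1)) x (EuclideanSpace.single i 1)

/-- The capacity `C_{2/q,q'}` of a set `A ⊆ ℝ^N`. -/
def capQ (N : ℕ) (q : ℝ) (A : Set (Euc N)) : ℝ :=
  sInf { c : ℝ | ∃ φ : Euc N → ℝ, ContDiff ℝ (⊤ : ℕ∞) φ ∧ HasCompactSupport φ ∧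
      (∃ U : Set (Euc N), IsOpen U ∧ A ⊆ U ∧ ∀ x ∈ U, 1 ≤ φ x) ∧
      c = (∫ x, φ x ^ (q / (q - 1))) +
          ∫ x, ∫ y, |φ x - φ y| ^ (q / (q - 1)) / ‖x - y‖ ^ ((N : ℝ) + 2 / (q - 1)) }

/-- The spherical shell piece `F_n` of `F` around `x` at time `t`. -/
def shell (N : ℕ) (F : Set (Euc N)) (x : Euc N) (t : ℝ) (n : ℕ) : Set (Euc N) :=
  {y | y ∈ F ∧ Real.sqrt ((n : ℝ) * t) ≤ dist x y ∧ dist x y ≤ Real.sqrt (((n : ℝ) + 1) * t)}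

/-- The parabolic capacitary potential `W_F`. -/
def Wpot (N : ℕ) (q : ℝ) (F : Set (Euc N)) (x : Euc N) (t : ℝ) : ℝ :=
  t ^ (-(N : ℝ) / 2) *
    ∑' n : ℕ,
      Real.sqrt (((n : ℝ) + 1) * t) ^ ((N : ℝ) - 2 / (q - 1)) * Real.exp (-(n : ℝ) / 4) *
        capQ N q ((fun y => (Real.sqrt (((n : ℝ) + 1) * t))⁻¹ • y) '' shell N F x t n)

/-- `u` is a positive solution of `∂ₜu - Δu + u^q = 0` in `Q_∞` whose initial
trace vanishes outside the closed set `F`. -/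
def IsSol (N : ℕ) (q : ℝ) (u : Euc N → ℝ → ℝ) (F : Set (Euc N)) : Prop :=
  ContDiffOn ℝ 2 (fun p : Euc N × ℝ => u p.1 p.2) (Set.univ ×ˢ Set.Ioi (0 : ℝ)) ∧
  (∀ x t, 0 < t → 0 < u x t) ∧
  (∀ x t, 0 < t → deriv (u x) t - lapl (fun y => u y t) x + u x t ^ q = 0) ∧
  (∀ E : Set (Euc N), IsCompact E → E ⊆ Fᶜ →
    Tendsto (fun t => sSup ((fun x => u x t) '' E)) (nhdsWithin 0 (Set.Ioi 0)) (nhds 0))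

/-- The heat potential of a function. -/
def heatPot (N : ℕ) (η : Euc N → ℝ) (x : Euc N) (t : ℝ) : ℝ :=
  ∫ y, (4 * π * t) ^ (-(N : ℝ) / 2) * Real.exp (-‖x - y‖ ^ 2 / (4 * t)) * η y

/-- The heat potential of a measure. -/
def heatPotM (N : ℕ) (μ : Measure (Euc N)) (x : Euc N) (t : ℝ) : ℝ :=
  ∫ y, (4 * π * t) ^ (-(N : ℝ) / 2) * Real.exp (-‖x - y‖ ^ 2 / (4 * t)) ∂μ

/-- The class `𝒯_{r,ρ}(K)` of test functions. -/
def TestFun (N : ℕ) (r ρ : ℝ) (K : Set (Euc N)) (η : Euc N → ℝ) : Prop :=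
  ContDiff ℝ (⊤ : ℕ∞) η ∧ HasCompactSupport η ∧ tsupport η ⊆ Metric.ball (0 : Euc N) (r + ρ) ∧
  (∀ x, 0 ≤ η x ∧ η x ≤ 1) ∧ (∀ x ∈ K, η x = 1)

/-- `‖R[η]‖_{L^{q'}}^{q'} = ∬_{Q_∞} (|∇ℍ[η]|² + |∂ₜℍ[η]|)^{q'} dx dt`. -/
def Rnorm (N : ℕ) (q : ℝ) (η : Euc N → ℝ) : ℝ :=
  ∫ t in Set.Ioi (0 : ℝ), ∫ x,
    (‖fderiv ℝ (fun y => heatPot N η y t) x‖ ^ 2 +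
      |deriv (fun τ => heatPot N η x τ) t|) ^ (q / (q - 1))

/-- The set of values `∫ η dμ` over test functions `η` with
`‖η‖_{L^{q'}} + ‖η‖_{Ḃ^{2/q,q'}} ≤ 1`; `‖μ‖_*` is its supremum. -/
def dualSet (N : ℕ) (q : ℝ) (μ : Measure (Euc N)) : Set ℝ :=
  { r : ℝ | ∃ η : Euc N → ℝ, ContDiff ℝ (⊤ : ℕ∞) η ∧ HasCompactSupport η ∧
      ((∫ x, |η x| ^ (q / (q - 1))) ^ ((q - 1) / q) +
          (∫ x, ∫ y, |η x - η y| ^ (q / (q - 1)) / ‖x - y‖ ^ ((N : ℝ) + 2 / (q - 1))) ^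
            ((q - 1) / q) ≤ 1) ∧
      r = ∫ x, η x ∂μ }

/-
The upper bound is a duality argument. Against `F ≥ 0` on the strip `(0, T] × ℝ^N`, the potential
`ℍ[μ]` integrates to `∫ 𝔾 F dμ`, where `𝔾 F (x) = ∬ heatKernel t (x - y) F(t, y) dy dt` is the
adjoint heat potential. With `p = q'`, the operator `𝔾` is bounded from `L^p` of the strip to the
Besov space `B^{2/q, p}`: a weighted Hölder inequality reduces the Gagliardo energy of `𝔾 F` to the
`L^1` modulus of continuity of the heat kernel, which is at most `min (2, C |h| / √t)`. Hence
`∬ ℍ[μ] F ≤ C ‖μ‖_* ‖F‖_p`.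

For the lower bound put `Φ(a) = ∫ (heatKernel a ⋆ η) dμ`, which tends to `∫ η dμ` as `a → 0`.
Telescoping `Φ` along a geometric sequence of times and averaging over the starting time bounds
`|∫ η dμ - Φ(4T)|` by a time integral of `|Φ(a) - Φ(4 τ)| / τ`. By the semigroup property each
increment is the integral of an oscillation of `η` at scale `√τ` against `ℍ[μ](·, τ)`, and Hölder's
inequality pairs `‖ℍ[μ]‖_q` with a weighted `L^p` norm of the oscillation, which is comparable to
the Gagliardo energy of `η`.
-/

open scoped ENNReal NNReal Topology Convolution
open Module

section IntegralInequalities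

lemma le_setLIntegral_of_forall_le_measure_mul {α : Type*} [MeasurableSpace α] {ν : Measure α}
    {s : Set α} (hs : MeasurableSet s) (h0 : ν s ≠ 0) (h_top : ν s ≠ ∞) {c : ℝ≥0∞}
    {f : α → ℝ≥0∞} (h : ∀ x ∈ s, c ≤ ν s * f x) : c ≤ ∫⁻ x in s, f x ∂ν := by
  calc c = ∫⁻ _ in s, (ν s)⁻¹ * c ∂ν := by
        rw [setLIntegral_const, mul_right_comm, ENNReal.inv_mul_cancel h0 h_top, one_mul]
    _ ≤ ∫⁻ x in s, f x ∂ν :=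
        setLIntegral_mono' hs fun x hx => (ENNReal.inv_mul_le_iff h0 h_top).2 (h x hx)

lemma lintegral_Ioc_rpow {α ρ : ℝ} (hρ : 0 ≤ ρ) (hα : -1 < α) :
    ∫⁻ t in Ioc 0 ρ, ENNReal.ofReal (t ^ α) = ENNReal.ofReal (ρ ^ (α + 1) / (α + 1)) := by
  rw [← ofReal_integral_eq_lintegral_ofReal, ← intervalIntegral.integral_of_le hρ,
    integral_rpow (Or.inl hα), zero_rpow (by linarith), sub_zero]
  · exact (intervalIntegrable_iff_integrableOn_Ioc_of_le hρ).1
      (intervalIntegral.intervalIntegrable_rpow' hα)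
  · filter_upwards [ae_restrict_mem measurableSet_Ioc] with t ht using rpow_nonneg ht.1.le _

lemma lintegral_Ioi_rpow {β ρ : ℝ} (hρ : 0 < ρ) (hβ : β < -1) :
    ∫⁻ t in Ioi ρ, ENNReal.ofReal (t ^ β) = ENNReal.ofReal (ρ ^ (β + 1) / (-β - 1)) := by
  rw [← ofReal_integral_eq_lintegral_ofReal (integrableOn_Ioi_rpow_of_lt hβ hρ),
    integral_Ioi_rpow_of_lt hβ hρ, neg_div, ← div_neg, neg_add, sub_eq_add_neg]
  filter_upwards [ae_restrict_mem measurableSet_Ioi] with t ht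
    using rpow_nonneg (hρ.trans ht).le _

lemma setLIntegral_Ioi_le_of_le_rpow {f : ℝ → ℝ≥0∞} {A B : ℝ≥0∞} {α β ρ : ℝ} (hρ : 0 < ρ)
    (hα : -1 < α) (hβ : β < -1)
    (h_low : ∀ t, 0 < t → t ≤ ρ → f t ≤ A * ENNReal.ofReal (t ^ α))
    (h_high : ∀ t, ρ < t → f t ≤ B * ENNReal.ofReal (t ^ β)) :
    ∫⁻ t in Ioi 0, f t ≤ A * ENNReal.ofReal (ρ ^ (α + 1) / (α + 1)) +
      B * ENNReal.ofReal (ρ ^ (β + 1) / (-β - 1)) := by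
  rw [← lintegral_Ioc_rpow hρ.le hα, ← lintegral_Ioi_rpow hρ hβ,
    ← lintegral_const_mul _ (by fun_prop), ← lintegral_const_mul _ (by fun_prop),
    ← Ioc_union_Ioi_eq_Ioi hρ.le]
  exact (lintegral_union_le _ _ _).trans <| add_le_add
    (setLIntegral_mono' measurableSet_Ioc fun t ht => h_low t ht.1 ht.2)
    (setLIntegral_mono' measurableSet_Ioi h_high)

variable {α β : Type*} [MeasurableSpace α] [MeasurableSpace β] {μ : Measure α} {ν : Measure β}
  {p q : ℝ}

lemma lintegral_mul_rpow_le_mul_lintegral_weighted (hp : 1 < p) {K F W : α → ℝ≥0∞}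
    (hK : AEMeasurable K μ) (hF : AEMeasurable F μ) (hW : AEMeasurable W μ)
    (hW0 : ∀ᵐ x ∂μ, W x ≠ 0) (hW_top : ∀ᵐ x ∂μ, W x ≠ ∞) :
    (∫⁻ x, K x * F x ∂μ) ^ p ≤
      (∫⁻ x, K x * W x ∂μ) ^ (p - 1) * ∫⁻ x, K x * (F x ^ p * W x ^ (1 - p)) ∂μ := by
  have hp0 : 0 < p := by linarith
  have hp_inv : p * p⁻¹ = 1 := mul_inv_cancel₀ hp0.ne'
  have h_inv_le : p⁻¹ ≤ 1 := inv_le_one_of_one_le₀ hp.le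
  have split : ∫⁻ x, K x * F x ∂μ =
      ∫⁻ x, (K x * W x) ^ (1 - p⁻¹) * (K x * (F x ^ p * W x ^ (1 - p))) ^ p⁻¹ ∂μ := by
    refine lintegral_congr_ae ?_
    filter_upwards [hW0, hW_top] with x h0 h_top
    rw [ENNReal.mul_rpow_of_nonneg _ _ (by linarith),
      ENNReal.mul_rpow_of_nonneg _ _ (by positivity),
      ENNReal.mul_rpow_of_nonneg _ _ (by positivity), ← ENNReal.rpow_mul, ← ENNReal.rpow_mul,
      mul_mul_mul_comm, ← ENNReal.rpow_add_of_nonneg _ _ (by linarith) (by positivity),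
      mul_left_comm (W x ^ _), ← ENNReal.rpow_add _ _ h0 h_top, hp_inv, sub_mul, hp_inv]
    simp
  calc _ ≤ ((∫⁻ x, K x * W x ∂μ) ^ (1 - p⁻¹) *
        (∫⁻ x, K x * (F x ^ p * W x ^ (1 - p)) ∂μ) ^ p⁻¹) ^ p := by
        rw [split]
        gcongr
        exact ENNReal.lintegral_mul_norm_pow_le (by fun_prop) (by fun_prop) (by linarith)
          (by positivity) (by ring)
    _ = _ := by
        rw [ENNReal.mul_rpow_of_nonneg _ _ hp0.le, ← ENNReal.rpow_mul, ← ENNReal.rpow_mul,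
          inv_mul_cancel₀ hp0.ne', ENNReal.rpow_one, sub_mul, inv_mul_cancel₀ hp0.ne', one_mul]

lemma lintegral_mul_rpow_le_mul_lintegral (hp : 1 < p) {K F : α → ℝ≥0∞}
    (hK : AEMeasurable K μ) (hF : AEMeasurable F μ) :
    (∫⁻ x, K x * F x ∂μ) ^ p ≤ (∫⁻ x, K x ∂μ) ^ (p - 1) * ∫⁻ x, K x * F x ^ p ∂μ := by
  simpa using lintegral_mul_rpow_le_mul_lintegral_weighted hp hK hF (W := fun _ => 1) (by fun_prop)
    (by simp) (by simp)

theorem lintegral_rpow_lintegral_le_of_schur [SFinite μ] [SFinite ν] (hp : 1 < p)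
    {K : α → β → ℝ≥0∞} {F W : β → ℝ≥0∞} {g : α → ℝ≥0∞}
    (hK : Measurable (Function.uncurry K)) (hF : Measurable F) (hW : Measurable W)
    (hg : Measurable g) (hW0 : ∀ᵐ v ∂ν, W v ≠ 0) (hW_top : ∀ᵐ v ∂ν, W v ≠ ∞) {C D : ℝ≥0∞}
    (h_row : ∀ᵐ u ∂μ, ∫⁻ v, K u v * W v ∂ν ≤ C * g u)
    (h_col : ∀ᵐ v ∂ν, ∫⁻ u, K u v * g u ^ (p - 1) ∂μ ≤ D * W v ^ (p - 1)) :
    ∫⁻ u, (∫⁻ v, K u v * F v ∂ν) ^ p ∂μ ≤ C ^ (p - 1) * D * ∫⁻ v, F v ^ p ∂ν := by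
  have hp1 : 0 ≤ p - 1 := by linarith
  have hKu (u) : Measurable (K u) := hK.of_uncurry_left
  have hKv (v) : Measurable fun u => K u v := hK.of_uncurry_right
  calc ∫⁻ u, (∫⁻ v, K u v * F v ∂ν) ^ p ∂μ
      ≤ ∫⁻ u, ∫⁻ v, C ^ (p - 1) * (K u v * g u ^ (p - 1) * (F v ^ p * W v ^ (1 - p))) ∂ν ∂μ := by
        refine lintegral_mono_ae ?_
        filter_upwards [h_row] with u hu
        have := hKu u
        calc _ ≤ (C * g u) ^ (p - 1) * ∫⁻ v, K u v * (F v ^ p * W v ^ (1 - p)) ∂ν :=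
              (lintegral_mul_rpow_le_mul_lintegral_weighted hp (hKu u).aemeasurable hF.aemeasurable
                hW.aemeasurable hW0 hW_top).trans (by gcongr)
          _ = _ := by
              rw [← lintegral_const_mul _ (by fun_prop), ENNReal.mul_rpow_of_nonneg _ _ hp1]
              congr 1 with v
              ring
    _ = ∫⁻ v, ∫⁻ u, C ^ (p - 1) * (K u v * g u ^ (p - 1) * (F v ^ p * W v ^ (1 - p))) ∂μ ∂ν := by
        refine lintegral_lintegral_swap (Measurable.aemeasurable ?_)
        simp only [Function.uncurry_def] at hK ⊢
        fun_prop
    _ ≤ ∫⁻ v, C ^ (p - 1) * D * F v ^ p ∂ν := by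
        refine lintegral_mono_ae ?_
        filter_upwards [h_col, hW0, hW_top] with v hv h0 h_top
        have := hKv v
        rw [lintegral_const_mul _ (by fun_prop), lintegral_mul_const _ (by fun_prop), mul_assoc]
        gcongr C ^ (p - 1) * ?_
        calc _ ≤ D * W v ^ (p - 1) * (F v ^ p * W v ^ (1 - p)) := by gcongr
          _ = D * F v ^ p * (W v ^ (p - 1) * W v ^ (1 - p)) := by ring
          _ = D * F v ^ p := by rw [← ENNReal.rpow_add _ _ h0 h_top]; simp
    _ = _ := lintegral_const_mul _ (by fun_prop)

theorem lintegral_rpow_le_of_forall_simpleFunc [SigmaFinite μ] (hpq : p.HolderConjugate q)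
    {U : α → ℝ≥0∞} {M : ℝ≥0∞}
    (h : ∀ F : SimpleFunc α ℝ≥0, ∫⁻ x, (F x : ℝ≥0∞) ^ p ∂μ ≠ ∞ →
      ∫⁻ x, U x * F x ∂μ ≤ M * (∫⁻ x, (F x : ℝ≥0∞) ^ p ∂μ) ^ p⁻¹) :
    ∫⁻ x, U x ^ q ∂μ ≤ M ^ q := by
  have hq := hpq.symm.pos
  by_contra! h_lt
  rw [lintegral_eq_nnreal, lt_iSup_iff] at h_lt
  obtain ⟨φ, hφ⟩ := h_lt
  simp only [lt_iSup_iff, SimpleFunc.coe_map, ← SimpleFunc.lintegral_eq_lintegral] at hφ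
  obtain ⟨hφU, hφ⟩ := hφ
  obtain ⟨g, hgφ, hg_top, hg⟩ := SimpleFunc.exists_lt_lintegral_simpleFunc_of_lt_lintegral hφ
  set G := ∫⁻ x, (g x : ℝ≥0∞) ∂μ
  have hgF (x) : (((g.map (· ^ p⁻¹)) x : ℝ≥0) : ℝ≥0∞) = (g x : ℝ≥0∞) ^ p⁻¹ := by
    simp [ENNReal.coe_rpow_of_nonneg _ hpq.inv_nonneg]
  have hgF_pow (x) : (((g.map (· ^ p⁻¹)) x : ℝ≥0) : ℝ≥0∞) ^ p = g x := by
    rw [hgF, ← ENNReal.rpow_mul, inv_mul_cancel₀ hpq.pos.ne', ENNReal.rpow_one]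
  have h_test := h (g.map (· ^ p⁻¹)) (by simpa only [hgF_pow] using hg_top.ne)
  simp_rw [hgF_pow, hgF] at h_test
  have h_le : G ^ q⁻¹ * G ^ p⁻¹ ≤ M * G ^ p⁻¹ := by
    rw [← ENNReal.rpow_add_of_nonneg _ _ hpq.symm.inv_nonneg hpq.inv_nonneg,
      hpq.symm.inv_add_inv_eq_one, ENNReal.rpow_one]
    refine (lintegral_mono fun x => ?_).trans h_test
    calc (g x : ℝ≥0∞) = (g x : ℝ≥0∞) ^ q⁻¹ * (g x : ℝ≥0∞) ^ p⁻¹ := by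
          rw [← ENNReal.rpow_add_of_nonneg _ _ hpq.symm.inv_nonneg hpq.inv_nonneg,
            hpq.symm.inv_add_inv_eq_one, ENNReal.rpow_one]
      _ ≤ U x * (g x : ℝ≥0∞) ^ p⁻¹ := by
          gcongr
          rw [ENNReal.rpow_inv_le_iff hq]
          exact (ENNReal.coe_le_coe.2 (hgφ x)).trans (hφU x)
  have hG0 : G ^ p⁻¹ ≠ 0 := (ENNReal.rpow_pos (pos_of_gt hg) hg_top.ne).ne'
  have hG_top : G ^ p⁻¹ ≠ ∞ := ENNReal.rpow_ne_top_of_nonneg hpq.inv_nonneg hg_top.ne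
  exact hg.not_ge ((ENNReal.rpow_inv_le_iff hq).1 ((ENNReal.mul_le_mul_iff_left hG0 hG_top).1 h_le))

lemma lintegral_rpow_lintegral_mul_sub_le {G : Type*} [MeasurableSpace G] [AddCommGroup G]
    [MeasurableAdd₂ G] [MeasurableNeg G] {μ : Measure G} [SFinite μ] [μ.IsAddRightInvariant]
    (hp : 1 < p) {φ f : G → ℝ≥0∞} (hφ : Measurable φ) (hf : Measurable f) :
    ∫⁻ x, (∫⁻ y, φ y * f (x - y) ∂μ) ^ p ∂μ ≤ (∫⁻ y, φ y ∂μ) ^ p * ∫⁻ x, f x ^ p ∂μ := by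
  calc ∫⁻ x, (∫⁻ y, φ y * f (x - y) ∂μ) ^ p ∂μ
      ≤ ∫⁻ x, (∫⁻ y, φ y ∂μ) ^ (p - 1) * ∫⁻ y, φ y * f (x - y) ^ p ∂μ ∂μ :=
        lintegral_mono fun x => lintegral_mul_rpow_le_mul_lintegral hp (by fun_prop) (by fun_prop)
    _ = (∫⁻ y, φ y ∂μ) ^ (p - 1) * ∫⁻ y, ∫⁻ x, φ y * f (x - y) ^ p ∂μ ∂μ := by
        rw [lintegral_const_mul _ (by fun_prop), lintegral_lintegral_swap (by fun_prop)]
    _ = (∫⁻ y, φ y ∂μ) ^ (p - 1) * ∫⁻ y, φ y * ∫⁻ x, f x ^ p ∂μ ∂μ := by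
        congr 2 with y
        rw [lintegral_const_mul _ (by fun_prop), lintegral_sub_right_eq_self (fun x => f x ^ p)]
    _ = (∫⁻ y, φ y ∂μ) ^ (p - 1 + 1) * ∫⁻ x, f x ^ p ∂μ := by
        rw [lintegral_mul_const _ hφ, ENNReal.rpow_add_of_nonneg _ _ (by linarith) zero_le_one,
          ENNReal.rpow_one, mul_assoc]
    _ = (∫⁻ y, φ y ∂μ) ^ p * ∫⁻ x, f x ^ p ∂μ := by rw [sub_add_cancel]

section Telescoping

variable {Φ : ℝ → ℝ} {J : ℝ → ℝ≥0∞} {T : ℝ}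

lemma enorm_half_sub_le_setLIntegral {b : ℝ} (hb : 0 < b)
    (h : ∀ τ a, 0 < τ → 2 * τ ≤ a → a ≤ 8 * τ → ‖Φ a - Φ τ‖ₑ ≤ J τ) :
    ‖Φ (2 * b) - Φ (4 * b)‖ₑ ≤ ∫⁻ τ in Ioc (b / 2) b, ENNReal.ofReal (4 / τ) * J τ := by
  have h_vol : volume (Ioc (b / 2) b) = ENNReal.ofReal (b / 2) := by
    rw [Real.volume_Ioc, sub_half]
  refine le_setLIntegral_of_forall_le_measure_mul measurableSet_Ioc ?_ (by simp) fun τ hτ => ?_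
  · rw [h_vol]
    simpa using hb
  have hτ0 : 0 < τ := (half_pos hb).trans hτ.1
  calc ‖Φ (2 * b) - Φ (4 * b)‖ₑ ≤ ‖Φ (2 * b) - Φ τ‖ₑ + ‖Φ (4 * b) - Φ τ‖ₑ := by
        rw [← sub_sub_sub_cancel_right _ _ (Φ τ)]
        exact enorm_sub_le
    _ ≤ J τ + J τ := by
        gcongr
        · exact h τ _ hτ0 (by linarith [hτ.2]) (by linarith [hτ.1])
        · exact h τ _ hτ0 (by linarith [hτ.2]) (by linarith [hτ.1])
    _ = ENNReal.ofReal 2 * J τ := by rw [ENNReal.ofReal_ofNat, two_mul]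
    _ ≤ volume (Ioc (b / 2) b) * (ENNReal.ofReal (4 / τ) * J τ) := by
        rw [h_vol, ← mul_assoc, ← ENNReal.ofReal_mul (half_pos hb).le]
        gcongr
        rw [mul_div_assoc', le_div_iff₀ hτ0]
        linarith [hτ.2]

lemma enorm_dyadic_le_add_setLIntegral (hT : 0 < T)
    (h : ∀ τ a, 0 < τ → 2 * τ ≤ a → a ≤ 8 * τ → ‖Φ a - Φ τ‖ₑ ≤ J τ) (n : ℕ) :
    ‖Φ (4 * (T / 2 ^ n))‖ₑ ≤
      ‖Φ (4 * T)‖ₑ + ∫⁻ τ in Ioc (T / 2 ^ n) T, ENNReal.ofReal (4 / τ) * J τ := by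
  induction n with
  | zero => simp
  | succ n ih =>
    set b := T / 2 ^ n with hb
    have hb0 : 0 < b := by positivity
    have hbT : b ≤ T := div_le_self hT.le (one_le_pow₀ one_le_two)
    rw [pow_succ, ← div_div, ← hb, show 4 * (b / 2) = 2 * b by ring,
      ← Ioc_union_Ioc_eq_Ioc (half_le_self hb0.le) hbT,
      lintegral_union measurableSet_Ioc (Ioc_disjoint_Ioc_of_le le_rfl), add_left_comm]
    calc ‖Φ (2 * b)‖ₑ ≤ ‖Φ (2 * b) - Φ (4 * b)‖ₑ + ‖Φ (4 * b)‖ₑ := by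
          simpa using enorm_add_le (Φ (2 * b) - Φ (4 * b)) (Φ (4 * b))
      _ ≤ _ := add_le_add (enorm_half_sub_le_setLIntegral hb0 h) ih

theorem enorm_le_add_setLIntegral_of_tendsto {Φ₀ : ℝ} (hT : 0 < T)
    (h : ∀ τ a, 0 < τ → 2 * τ ≤ a → a ≤ 8 * τ → ‖Φ a - Φ τ‖ₑ ≤ J τ)
    (h_lim : Tendsto Φ (𝓝[>] 0) (𝓝 Φ₀)) :
    ‖Φ₀‖ₑ ≤ ‖Φ (4 * T)‖ₑ + ∫⁻ τ in Ioc 0 T, ENNReal.ofReal (4 / τ) * J τ := by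
  have h_dyadic : Tendsto (fun n : ℕ => 4 * (T / 2 ^ n)) atTop (𝓝[>] 0) := by
    refine tendsto_nhdsWithin_iff.2 ⟨?_, Eventually.of_forall fun n => ?_⟩
    · simpa using ((tendsto_const_nhds (x := T)).div_atTop
        (tendsto_pow_atTop_atTop_of_one_lt one_lt_two)).const_mul 4
    · exact mem_Ioi.2 (by positivity)
  refine le_of_tendsto (h_lim.comp h_dyadic).enorm (Eventually.of_forall fun n => ?_)
  refine (enorm_dyadic_le_add_setLIntegral hT h n).trans ?_
  gcongr
  positivity

end Telescoping

end IntegralInequalities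

section HeatKernel

variable {E : Type*} [NormedAddCommGroup E] [InnerProductSpace ℝ E]

/-- The Gauss–Weierstrass kernel `(4πt)^(-d/2) exp(-‖z‖²/(4t))`, the convolution kernel of the heat
semigroup on a Euclidean space of dimension `d`. It is meaningful for `0 < t` only. -/
def heatKernel (t : ℝ) (z : E) : ℝ :=
  (4 * π * t) ^ (-(finrank ℝ E : ℝ) / 2) * rexp (-‖z‖ ^ 2 / (4 * t))

variable {s t u v : ℝ} {x z h : E}

lemma heatKernel_pos (ht : 0 < t) (z : E) : 0 < heatKernel t z := by
  unfold heatKernel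
  positivity

lemma heatKernel_neg (t : ℝ) (z : E) : heatKernel t (-z) = heatKernel t z := by
  simp [heatKernel]

@[fun_prop]
lemma continuous_heatKernel (t : ℝ) : Continuous (heatKernel t : E → ℝ) := by
  unfold heatKernel
  fun_prop

@[fun_prop]
lemma measurable_heatKernel [MeasurableSpace E] [OpensMeasurableSpace E] {α : Type*}
    [MeasurableSpace α] {f : α → ℝ} {g : α → E} (hf : Measurable f) (hg : Measurable g) :
    Measurable fun a => heatKernel (f a) (g a) := by
  unfold heatKernel
  fun_prop

lemma heatKernel_le_rpow_mul (hu : 0 < u) (huv : u ≤ v) (z : E) :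
    heatKernel u z ≤ (v / u) ^ ((finrank ℝ E : ℝ) / 2) * heatKernel v z := by
  have hv := hu.trans_le huv
  have h_const : (v / u) ^ ((finrank ℝ E : ℝ) / 2) * (4 * π * v) ^ (-(finrank ℝ E : ℝ) / 2) =
      (4 * π * u) ^ (-(finrank ℝ E : ℝ) / 2) := by
    rw [show 4 * π * v = v / u * (4 * π * u) by field_simp, mul_rpow (by positivity)
      (by positivity), ← mul_assoc, ← rpow_add (by positivity), neg_div, add_neg_cancel, rpow_zero,
      one_mul]
  unfold heatKernel
  rw [← mul_assoc, h_const, neg_div (4 * u), neg_div (4 * v)]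
  gcongr

lemma heatKernel_le_rpow (ht : 0 < t) (z : E) :
    heatKernel t z ≤ (4 * π * t) ^ (-(finrank ℝ E : ℝ) / 2) := by
  refine mul_le_of_le_one_right (by positivity) (exp_le_one_iff.2 ?_)
  rw [neg_div, neg_nonpos]
  positivity

lemma heatKernel_le_mul_rpow {m : ℝ} (hm : 0 < m) (ht : 0 < t) (hz : z ≠ 0) :
    heatKernel t z ≤ (4 * π) ^ (-(finrank ℝ E : ℝ) / 2) * (4 * m) ^ m * ‖z‖ ^ (-2 * m) *
      t ^ (m - (finrank ℝ E : ℝ) / 2) := by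
  have hz := norm_pos_iff.2 hz
  have h_exp : rexp (-‖z‖ ^ 2 / (4 * t)) ≤ (‖z‖ ^ 2 / (4 * t) / m) ^ (-m) := by
    rw [rpow_def_of_pos (by positivity), exp_le_exp]
    have := log_le_self (x := ‖z‖ ^ 2 / (4 * t) / m) (by positivity)
    calc -‖z‖ ^ 2 / (4 * t) = -(‖z‖ ^ 2 / (4 * t) / m * m) := by field_simp
      _ ≤ log (‖z‖ ^ 2 / (4 * t) / m) * -m := by rw [mul_neg]; gcongr
  calc heatKernel t z
      ≤ (4 * π * t) ^ (-(finrank ℝ E : ℝ) / 2) * (‖z‖ ^ 2 / (4 * t) / m) ^ (-m) := by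
        unfold heatKernel
        gcongr
    _ = _ := by
        rw [show ‖z‖ ^ 2 / (4 * t) / m = (4 * m)⁻¹ * (t⁻¹ * ‖z‖ ^ 2) by field_simp,
          mul_rpow (x := 4 * π) (by positivity) ht.le, mul_rpow (x := (4 * m)⁻¹) (by positivity)
          (by positivity), mul_rpow (x := t⁻¹) (by positivity) (by positivity),
          inv_rpow (by positivity), inv_rpow ht.le,
          rpow_neg (x := 4 * m) (by positivity), rpow_neg ht.le m, inv_inv, inv_inv, sub_eq_add_neg,
          rpow_add ht, ← neg_div, ← rpow_natCast ‖z‖, ← rpow_mul hz.le]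
        push_cast
        rw [mul_neg, neg_mul]
        ring

lemma rpow_mul_heatKernel_le_const_mul {p a : ℝ} (hp : 0 < p) (ha : 0 < a) (ht : 0 < t)
    (hh : h ≠ 0) :
    t ^ (-p) * heatKernel (a * t) h ≤ (4 * π) ^ (-(finrank ℝ E : ℝ) / 2) *
      (4 * (p + finrank ℝ E / 2)) ^ (p + finrank ℝ E / 2 : ℝ) * a ^ p *
        ‖h‖ ^ (-(finrank ℝ E + 2 * p)) := by
  set m := p + finrank ℝ E / 2 with hm
  calc t ^ (-p) * heatKernel (a * t) h
      ≤ t ^ (-p) * ((4 * π) ^ (-(finrank ℝ E : ℝ) / 2) * (4 * m) ^ m * ‖h‖ ^ (-2 * m) *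
          (a * t) ^ (m - (finrank ℝ E : ℝ) / 2)) := by
        gcongr
        exact heatKernel_le_mul_rpow (by positivity) (by positivity) hh
    _ = (4 * π) ^ (-(finrank ℝ E : ℝ) / 2) * (4 * m) ^ m * a ^ p *
          ‖h‖ ^ (-(finrank ℝ E + 2 * p)) * (t ^ (-p) * t ^ p) := by
        rw [hm, add_sub_cancel_right, mul_rpow ha.le ht.le]
        ring_nf
    _ = _ := by rw [← rpow_add ht, neg_add_cancel, rpow_zero, mul_one]

lemma rpow_mul_heatKernel_le_const_mul_rpow (p : ℝ) {a : ℝ} (ha : 0 < a) (ht : 0 < t) (h : E) :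
    t ^ (-p) * heatKernel (a * t) h ≤
      (4 * π * a) ^ (-(finrank ℝ E : ℝ) / 2) * t ^ (-(p + finrank ℝ E / 2)) := by
  calc t ^ (-p) * heatKernel (a * t) h
      ≤ t ^ (-p) * (4 * π * (a * t)) ^ (-(finrank ℝ E : ℝ) / 2) := by
        gcongr
        exact heatKernel_le_rpow (by positivity) h
    _ = _ := by
        rw [← mul_assoc (4 * π), mul_rpow (by positivity) ht.le, mul_left_comm, ← rpow_add ht,
          neg_add, neg_div]

lemma exists_lintegral_rpow_mul_heatKernel_le {p a : ℝ} (hp : 1 < p) (ha : 0 < a) :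
    ∃ C : ℝ≥0, ∀ h : E, h ≠ 0 →
      ∫⁻ τ in Ioi 0, ENNReal.ofReal (τ ^ (-p)) * ‖heatKernel (a * τ) h‖ₑ ≤
        C * ENNReal.ofReal (‖h‖ ^ (-(finrank ℝ E + 2 * (p - 1)))) := by
  set d := (finrank ℝ E : ℝ)
  have hd : 0 ≤ d := Nat.cast_nonneg _
  set c₁ := (4 * π) ^ (-d / 2) * (4 * (p + d / 2)) ^ (p + d / 2) * a ^ p
  set c₂ := (4 * π * a) ^ (-d / 2)
  have hp0 : 0 < p := by linarith
  have hm : 0 < p + d / 2 - 1 := by linarith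
  have : 0 ≤ c₁ := by positivity
  have : 0 ≤ c₂ := by positivity
  refine ⟨(c₁ + c₂ / (p + d / 2 - 1)).toNNReal, fun h hh => ?_⟩
  have hr := norm_pos_iff.2 hh
  have h_ofReal : ∀ τ, 0 < τ → ENNReal.ofReal (τ ^ (-p)) * ‖heatKernel (a * τ) h‖ₑ =
      ENNReal.ofReal (τ ^ (-p) * heatKernel (a * τ) h) := fun τ hτ => by
    rw [Real.enorm_of_nonneg (heatKernel_pos (by positivity) h).le,
      ← ENNReal.ofReal_mul (by positivity)]
  have h_low : ∀ τ, 0 < τ → τ ≤ ‖h‖ ^ 2 →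
      ENNReal.ofReal (τ ^ (-p)) * ‖heatKernel (a * τ) h‖ₑ ≤
        ENNReal.ofReal (c₁ * ‖h‖ ^ (-(d + 2 * p))) * ENNReal.ofReal (τ ^ (0 : ℝ)) := by
    intro τ hτ _
    rw [h_ofReal τ hτ, rpow_zero, ENNReal.ofReal_one, mul_one]
    exact ENNReal.ofReal_le_ofReal
      (rpow_mul_heatKernel_le_const_mul hp0 ha hτ hh)
  have h_high : ∀ τ, ‖h‖ ^ 2 < τ → ENNReal.ofReal (τ ^ (-p)) * ‖heatKernel (a * τ) h‖ₑ ≤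
      ENNReal.ofReal c₂ * ENNReal.ofReal (τ ^ (-(p + d / 2))) := by
    intro τ hτ
    have hτ0 : 0 < τ := (sq_pos_of_pos hr).trans hτ
    rw [h_ofReal τ hτ0, ← ENNReal.ofReal_mul (by positivity)]
    exact ENNReal.ofReal_le_ofReal (rpow_mul_heatKernel_le_const_mul_rpow p ha hτ0 h)
  refine (setLIntegral_Ioi_le_of_le_rpow (sq_pos_of_pos hr) (by norm_num) (by linarith) h_low
    h_high).trans (le_of_eq ?_)
  have h_pow (x : ℝ) : (‖h‖ ^ 2) ^ x = ‖h‖ ^ (2 * x) := (rpow_natCast_mul hr.le 2 x).symm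
  rw [← ENNReal.ofReal_mul (by positivity), ← ENNReal.ofReal_mul (by positivity), h_pow, h_pow,
    neg_neg, mul_assoc, zero_add, div_one, ← rpow_add hr,
    ← ENNReal.ofReal_add (by positivity) (by positivity), ENNReal.ofNNReal_toNNReal,
    ← ENNReal.ofReal_mul (by positivity)]
  ring_nf

lemma heatKernel_mul_heatKernel_sub (hs : 0 < s) (ht : 0 < t) (x z : E) :
    heatKernel s z * heatKernel t (x - z) =
      heatKernel (s + t) x * heatKernel (s * t / (s + t)) (z - (s / (s + t)) • x) := by
  have h_exponent : -‖z‖ ^ 2 / (4 * s) + -‖x - z‖ ^ 2 / (4 * t) =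
      -‖x‖ ^ 2 / (4 * (s + t)) + -‖z - (s / (s + t)) • x‖ ^ 2 / (4 * (s * t / (s + t))) := by
    rw [norm_sub_sq_real, norm_sub_sq_real, norm_smul, inner_smul_right, real_inner_comm, mul_pow,
      norm_eq_abs, sq_abs]
    field_simp
    ring
  unfold heatKernel
  rw [mul_mul_mul_comm, mul_mul_mul_comm ((4 * π * (s + t)) ^ _), ← exp_add, ← exp_add, h_exponent,
    ← mul_rpow (by positivity) (by positivity), ← mul_rpow (by positivity) (by positivity)]
  congr 2
  field_simp

lemma heatKernel_sqrt_smul (ht : 0 < t) (z : E) :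
    heatKernel t (√t • z) = (√t ^ finrank ℝ E)⁻¹ * heatKernel 1 z := by
  have h_sqrt : (√t ^ finrank ℝ E)⁻¹ = t ^ (-(finrank ℝ E : ℝ) / 2) := by
    rw [sqrt_eq_rpow, ← rpow_mul_natCast ht.le, ← rpow_neg ht.le]
    ring_nf
  rw [heatKernel, heatKernel, h_sqrt, norm_smul, mul_pow, norm_of_nonneg (sqrt_nonneg t),
    sq_sqrt ht.le, mul_rpow (by positivity) ht.le, mul_one (4 * π), ← mul_assoc,
    mul_comm (t ^ _), mul_comm t, ← neg_mul, mul_div_mul_right _ _ ht.ne', mul_one]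

section Modulus

lemma abs_exp_neg_sq_half_sub_le (a b : ℝ) :
    |rexp (-(a ^ 2 / 2)) - rexp (-(b ^ 2 / 2))| ≤ |a - b| := by
  have h_lip : LipschitzWith 1 fun y : ℝ => rexp (-(y ^ 2 / 2)) := by
    refine lipschitzWith_of_nnnorm_deriv_le (by fun_prop) fun y => ?_
    have h_deriv : HasDerivAt (fun y : ℝ => rexp (-(y ^ 2 / 2))) (rexp (-(y ^ 2 / 2)) * -y) y := by
      simpa using (((hasDerivAt_id' y).pow 2).div_const 2).fun_neg.exp
    rw [h_deriv.deriv, ← NNReal.coe_le_coe, coe_nnnorm, norm_mul, norm_neg, norm_of_nonneg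
      (exp_pos _).le, exp_neg, inv_mul_le_iff₀ (exp_pos _), norm_eq_abs, NNReal.coe_one, mul_one]
    nlinarith [add_one_le_exp (y ^ 2 / 2), sq_nonneg (|y| - 1), sq_abs y]
  simpa [dist_eq] using h_lip.dist_le_mul a b

lemma abs_exp_neg_sq_sub_le (a b : ℝ) : |rexp (-a ^ 2) - rexp (-b ^ 2)| ≤
    |a - b| * (rexp (-(a ^ 2 / 2)) + rexp (-(b ^ 2 / 2))) := by
  have h_sq (y : ℝ) : rexp (-y ^ 2) = rexp (-(y ^ 2 / 2)) ^ 2 := by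
    rw [← exp_nat_mul]
    congr 1
    push_cast
    ring
  rw [h_sq, h_sq, sq_sub_sq, abs_mul, mul_comm, abs_of_pos (add_pos (exp_pos _) (exp_pos _))]
  gcongr ?_ * _
  exact abs_exp_neg_sq_half_sub_le a b

lemma abs_heatKernel_add_sub_le (ht : 0 < t) (z h : E) :
    |heatKernel t (z + h) - heatKernel t z| ≤ ‖h‖ / √t *
      (2 ^ ((finrank ℝ E : ℝ) / 2) * (heatKernel (2 * t) (z + h) + heatKernel (2 * t) z)) := by
  have h_kernel (z : E) : heatKernel t z =
      (4 * π * t) ^ (-(finrank ℝ E : ℝ) / 2) * rexp (-(‖z‖ / (2 * √t)) ^ 2) := by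
    rw [heatKernel, div_pow, mul_pow, sq_sqrt ht.le]
    norm_num [neg_div]
  have h_kernel_two (z : E) : 2 ^ ((finrank ℝ E : ℝ) / 2) * heatKernel (2 * t) z =
      (4 * π * t) ^ (-(finrank ℝ E : ℝ) / 2) * rexp (-((‖z‖ / (2 * √t)) ^ 2 / 2)) := by
    rw [heatKernel, show 4 * π * (2 * t) = 2 * (4 * π * t) by ring, mul_rpow (by positivity)
      (by positivity), ← mul_assoc, ← mul_assoc, ← rpow_add (by positivity), neg_div,
      add_neg_cancel, rpow_zero, one_mul, div_pow, mul_pow, sq_sqrt ht.le]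
    congr 2
    ring
  rw [mul_add (2 ^ _), h_kernel, h_kernel, h_kernel_two, h_kernel_two, ← mul_sub, ← mul_add,
    abs_mul, abs_of_nonneg (by positivity), mul_left_comm]
  gcongr
  refine (abs_exp_neg_sq_sub_le _ _).trans ?_
  gcongr
  rw [← sub_div, abs_div, abs_of_pos (a := 2 * √t) (by positivity)]
  have h_norm : |‖z + h‖ - ‖z‖| ≤ ‖h‖ := by simpa using abs_norm_sub_norm_le (z + h) z
  gcongr
  linarith [sqrt_nonneg t]

end Modulus

section Integrals

variable [FiniteDimensional ℝ E] [MeasurableSpace E] [BorelSpace E]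

lemma integral_heatKernel (ht : 0 < t) : ∫ z : E, heatKernel t z = 1 := by
  have h_exp (z : E) : -‖z‖ ^ 2 / (4 * t) = -(1 / (4 * t)) * ‖z‖ ^ 2 := by ring
  simp_rw [heatKernel, h_exp]
  rw [integral_const_mul, GaussianFourier.integral_rexp_neg_mul_sq_norm (by positivity),
    div_div_eq_mul_div, div_one, mul_left_comm π, ← mul_assoc, ← rpow_add (by positivity), neg_div,
    neg_add_cancel, rpow_zero]

lemma integrable_heatKernel (ht : 0 < t) : Integrable (heatKernel t : E → ℝ) :=
  .of_integral_ne_zero (by simp [integral_heatKernel ht])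

lemma lintegral_enorm_heatKernel (ht : 0 < t) : ∫⁻ z : E, ‖heatKernel t z‖ₑ = 1 := by
  have h_enorm (z : E) : ‖heatKernel t z‖ₑ = ENNReal.ofReal (heatKernel t z) :=
    Real.enorm_eq_ofReal (heatKernel_pos ht z).le
  simp_rw [h_enorm]
  rw [← ofReal_integral_eq_lintegral_ofReal (integrable_heatKernel ht)
    (Eventually.of_forall fun z => (heatKernel_pos ht z).le), integral_heatKernel ht,
    ENNReal.ofReal_one]

lemma lintegral_enorm_heatKernel_sub_left (ht : 0 < t) (x : E) :
    ∫⁻ y, ‖heatKernel t (x - y)‖ₑ = 1 := by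
  rw [lintegral_sub_left_eq_self (fun z => ‖heatKernel t z‖ₑ), lintegral_enorm_heatKernel ht]

lemma lintegral_enorm_heatKernel_sub_right (ht : 0 < t) (y : E) :
    ∫⁻ x, ‖heatKernel t (x - y)‖ₑ = 1 := by
  rw [lintegral_sub_right_eq_self (fun z => ‖heatKernel t z‖ₑ), lintegral_enorm_heatKernel ht]

theorem heatKernel_convolution_heatKernel (hs : 0 < s) (ht : 0 < t) :
    heatKernel s ⋆ heatKernel t = (heatKernel (s + t) : E → ℝ) := by
  ext x
  simp_rw [convolution_def, ContinuousLinearMap.lsmul_apply, smul_eq_mul,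
    heatKernel_mul_heatKernel_sub hs ht]
  rw [integral_const_mul, integral_sub_right_eq_self (heatKernel (s * t / (s + t)) : E → ℝ),
    integral_heatKernel (by positivity), mul_one]

theorem lintegral_enorm_heatKernel_add_sub_le :
    ∃ C : ℝ≥0, ∀ t : ℝ, 0 < t → ∀ h : E,
      ∫⁻ z : E, ‖heatKernel t (z + h) - heatKernel t z‖ₑ ≤
        C * ENNReal.ofReal (min 1 (‖h‖ / √t)) := by
  have h_trans {s : ℝ} (hs : 0 < s) (h : E) : ∫⁻ z : E, ‖heatKernel s (z + h)‖ₑ = 1 := by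
    rw [lintegral_add_right_eq_self (fun z => ‖heatKernel s z‖ₑ), lintegral_enorm_heatKernel hs]
  have h_one_le : (1 : ℝ≥0) ≤ 2 ^ ((finrank ℝ E : ℝ) / 2) :=
    NNReal.one_le_rpow one_le_two (by positivity)
  refine ⟨2 ^ ((finrank ℝ E : ℝ) / 2) * 2, fun t ht h => ?_⟩
  rw [ENNReal.ofReal_min, mul_min]
  refine le_min ?_ ?_
  · calc ∫⁻ z : E, ‖heatKernel t (z + h) - heatKernel t z‖ₑ
        ≤ ∫⁻ z : E, (‖heatKernel t (z + h)‖ₑ + ‖heatKernel t z‖ₑ) :=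
          lintegral_mono fun z => enorm_sub_le
      _ = 1 * 2 := by
          rw [lintegral_add_right _ (by fun_prop), h_trans ht, lintegral_enorm_heatKernel ht,
            one_mul, one_add_one_eq_two]
      _ ≤ _ := by
          rw [ENNReal.ofReal_one, mul_one]
          exact_mod_cast mul_le_mul_left h_one_le 2
  · calc ∫⁻ z : E, ‖heatKernel t (z + h) - heatKernel t z‖ₑ
        ≤ ∫⁻ z : E, ENNReal.ofReal (‖h‖ / √t) * ((2 ^ ((finrank ℝ E : ℝ) / 2) : ℝ≥0) *
            (‖heatKernel (2 * t) (z + h)‖ₑ + ‖heatKernel (2 * t) z‖ₑ)) := by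
          refine lintegral_mono fun z => ?_
          have h2t := mul_pos two_pos ht
          simp only [Real.enorm_eq_ofReal_abs, abs_of_pos (heatKernel_pos h2t _)]
          rw [← ENNReal.ofReal_add (heatKernel_pos h2t _).le (heatKernel_pos h2t _).le,
            ← ENNReal.ofReal_coe_nnreal, ← ENNReal.ofReal_mul (by positivity),
            ← ENNReal.ofReal_mul (by positivity)]
          exact ENNReal.ofReal_le_ofReal (abs_heatKernel_add_sub_le ht z h)
      _ = _ := by
          rw [lintegral_const_mul _ (by fun_prop), lintegral_const_mul _ (by fun_prop),
            lintegral_add_right _ (by fun_prop), h_trans (by positivity),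
            lintegral_enorm_heatKernel (by positivity), one_add_one_eq_two, mul_comm,
            ENNReal.coe_mul, ENNReal.coe_ofNat]

end Integrals

end HeatKernel

section PolarIntegration

variable {E : Type*} [NormedAddCommGroup E] [NormedSpace ℝ E] [FiniteDimensional ℝ E]
  [Nontrivial E] [MeasurableSpace E] [BorelSpace E]

lemma lintegral_fun_norm_addHaar (μ : Measure E) [μ.IsAddHaarMeasure] {f : ℝ → ℝ≥0∞}
    (hf : Measurable f) :
    ∫⁻ x, f ‖x‖ ∂μ =
      finrank ℝ E * μ (ball 0 1) *
        ∫⁻ r in Ioi 0, ENNReal.ofReal (r ^ (finrank ℝ E - 1)) * f r := by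
  have h_meas : Measurable fun r : Ioi (0 : ℝ) => f r := by fun_prop
  calc ∫⁻ x, f ‖x‖ ∂μ
      = ∫⁻ x : ({0}ᶜ : Set E), f ‖x.1‖ ∂(μ.comap (↑)) := by
        rw [lintegral_subtype_comap (measurableSet_singleton _).compl fun x => f ‖x‖,
          restrict_compl_singleton]
    _ = ∫⁻ z, f z.2 ∂(μ.toSphere.prod (.volumeIoiPow (finrank ℝ E - 1))) := by
        simpa using μ.measurePreserving_homeomorphUnitSphereProd.lintegral_comp
          (h_meas.comp measurable_snd)
    _ = μ.toSphere univ * ∫⁻ r : Ioi (0 : ℝ), f r ∂.volumeIoiPow (finrank ℝ E - 1) := by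
        rw [lintegral_prod _ (by fun_prop)]
        simp only [lintegral_const, mul_comm]
    _ = _ := by
        rw [μ.toSphere_apply_univ, Measure.volumeIoiPow,
          lintegral_withDensity_eq_lintegral_mul _ (by fun_prop) h_meas]
        simp only [Pi.mul_apply]
        rw [lintegral_subtype_comap measurableSet_Ioi
          fun r => ENNReal.ofReal (r ^ (finrank ℝ E - 1)) * f r]

end PolarIntegration

section FractionalSobolev

lemma exists_enorm_add_sub_le_min_one_norm {E : Type*} [NormedAddCommGroup E] [NormedSpace ℝ E]
    {η : E → ℝ} (hη : ContDiff ℝ 1 η) (hη_supp : HasCompactSupport η) :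
    ∃ L : ℝ≥0, ∀ x h, ‖η (x + h) - η x‖ₑ ≤ L * ENNReal.ofReal (min 1 ‖h‖) := by
  obtain ⟨L, hL⟩ := hη.lipschitzWith_of_hasCompactSupport hη_supp one_ne_zero
  obtain ⟨B, hB⟩ := hη_supp.exists_bound_of_continuous hη.continuous
  have h_lip : ∀ x h, ‖η (x + h) - η x‖ ≤ L * ‖h‖ := fun x h => by
    simpa using hL.norm_sub_le (x + h) x
  have h_bdd : ∀ x h, ‖η (x + h) - η x‖ ≤ 2 * B := fun x h =>
    (norm_sub_le _ _).trans (by linarith [hB x, hB (x + h)])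
  refine ⟨max L (2 * B).toNNReal, fun x h => ?_⟩
  rw [← ENNReal.ofReal_coe_nnreal, ← ENNReal.ofReal_mul (by positivity), ← ofReal_norm]
  refine ENNReal.ofReal_le_ofReal ?_
  rw [NNReal.coe_max, mul_min_of_nonneg _ _ (by positivity), mul_one]
  refine le_min ((h_bdd x h).trans ?_) ((h_lip x h).trans ?_)
  · exact (le_coe_toNNReal _).trans (le_max_right _ _)
  · gcongr
    exact le_max_left _ _

variable {E : Type*} [NormedAddCommGroup E] [InnerProductSpace ℝ E] [FiniteDimensional ℝ E]
  [MeasurableSpace E] [BorelSpace E] {s p θ m : ℝ} {η φ χ : E → ℝ}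

/-- The measure `‖h‖^(-(d+θ)) dh` on a Euclidean space of dimension `d`. With `θ = sp` it is the
measure of increments `h = y - x` in the Gagliardo seminorm. -/
def gagliardoMeasure (θ : ℝ) : Measure E :=
  volume.withDensity fun h => ENNReal.ofReal (‖h‖ ^ (-(finrank ℝ E + θ)))

instance : SFinite (gagliardoMeasure θ : Measure E) := by
  unfold gagliardoMeasure
  infer_instance

lemma lintegral_gagliardoMeasure (θ : ℝ) {f : E → ℝ≥0∞} (hf : Measurable f) :
    ∫⁻ h, f h ∂gagliardoMeasure θ =
      ∫⁻ h, ENNReal.ofReal (‖h‖ ^ (-(finrank ℝ E + θ))) * f h :=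
  lintegral_withDensity_eq_lintegral_mul _ (by fun_prop) hf

lemma lintegral_min_one_rpow_gagliardoMeasure_le [Nontrivial E] (hθ : 0 < θ) (hθm : θ < m) :
    ∃ C : ℝ≥0, ∀ ρ : ℝ, 0 < ρ →
      ∫⁻ h : E, ENNReal.ofReal (min 1 (‖h‖ / ρ)) ^ m ∂gagliardoMeasure θ ≤
        C * ENNReal.ofReal (ρ ^ (-θ)) := by
  set d := finrank ℝ E
  have hd : 1 ≤ d := finrank_pos
  have hm := hθ.trans hθm
  have h_pow : ∀ r : ℝ, 0 < r → r ^ (d - 1) * r ^ (-(d + θ)) = r ^ (-1 - θ) := fun r hr => by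
    rw [← rpow_natCast, ← rpow_add hr, Nat.cast_sub hd]
    congr 1
    push_cast
    ring
  lift volume (ball (0 : E) 1) to ℝ≥0 using measure_ball_lt_top.ne with V hV
  refine ⟨d * V * ((m - θ)⁻¹ + θ⁻¹).toNNReal, fun ρ hρ => ?_⟩
  rw [lintegral_gagliardoMeasure θ (by fun_prop), lintegral_fun_norm_addHaar volume
    (f := fun r => ENNReal.ofReal (r ^ (-(d + θ))) * ENNReal.ofReal (min 1 (r / ρ)) ^ m)
    (by fun_prop), ← hV]
  push_cast
  rw [mul_assoc (_ * _)]
  gcongr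
  calc ∫⁻ r in Ioi 0, ENNReal.ofReal (r ^ (d - 1)) *
        (ENNReal.ofReal (r ^ (-(d + θ))) * ENNReal.ofReal (min 1 (r / ρ)) ^ m)
      ≤ ENNReal.ofReal (ρ ^ (-m)) * ENNReal.ofReal (ρ ^ (m - 1 - θ + 1) / (m - 1 - θ + 1)) +
          1 * ENNReal.ofReal (ρ ^ (-1 - θ + 1) / (-(-1 - θ) - 1)) := by
        refine setLIntegral_Ioi_le_of_le_rpow hρ (by linarith) (by linarith)
          (fun r hr hrρ => ?_) fun r hr => ?_
        · rw [← mul_assoc, ← ENNReal.ofReal_mul (by positivity), h_pow r hr,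
            min_eq_right ((div_le_one hρ).2 hrρ), ENNReal.ofReal_rpow_of_nonneg (by positivity)
            hm.le, ← ENNReal.ofReal_mul (by positivity), ← ENNReal.ofReal_mul (by positivity),
            div_rpow hr.le hρ.le, rpow_neg hρ.le, show m - 1 - θ = -1 - θ + m by ring,
            rpow_add hr, div_eq_inv_mul, mul_left_comm]
        · have hr0 := hρ.trans hr
          rw [← mul_assoc, ← ENNReal.ofReal_mul (by positivity), h_pow r hr0,
            min_eq_left ((one_le_div hρ).2 hr.le), ENNReal.ofReal_one, ENNReal.one_rpow, mul_one,
            one_mul]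
    _ = ENNReal.ofReal ((m - θ)⁻¹ + θ⁻¹) * ENNReal.ofReal (ρ ^ (-θ)) := by
        have := sub_pos.2 hθm
        rw [one_mul, ← ENNReal.ofReal_mul (by positivity), ← ENNReal.ofReal_mul (by positivity),
          ← ENNReal.ofReal_add (by ring_nf; ring_nf at this; positivity) (by ring_nf; positivity),
          mul_div_assoc', ← rpow_add hρ]
        ring_nf

/-- The `p`-th power of the Gagliardo seminorm `‖η‖_{Ḃ^{s,p}}`, written in the variables `(h, x)`
with `h = y - x`. -/
def gagliardoEnergy (s p : ℝ) (η : E → ℝ) : ℝ≥0∞ :=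
  ∫⁻ z, ‖η (z.2 + z.1) - η z.2‖ₑ ^ p ∂(gagliardoMeasure (s * p)).prod volume

/-- The inhomogeneous norm `‖η‖_{L^p} + ‖η‖_{Ḃ^{s,p}}`, which may be infinite. -/
def besovNorm (s p : ℝ) (η : E → ℝ) : ℝ≥0∞ :=
  (∫⁻ x, ‖η x‖ₑ ^ p) ^ p⁻¹ + gagliardoEnergy s p η ^ p⁻¹

lemma gagliardoEnergy_eq_lintegral_lintegral (s p : ℝ) (hη : Measurable η) :
    gagliardoEnergy s p η =
      ∫⁻ h, ∫⁻ x, ‖η (x + h) - η x‖ₑ ^ p ∂volume ∂gagliardoMeasure (s * p) := by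
  unfold gagliardoEnergy
  exact lintegral_prod _ (by fun_prop)

lemma besovNorm_const_mul (s : ℝ) (hp : 0 < p) (c : ℝ) (η : E → ℝ) :
    besovNorm s p (fun x => c * η x) = ‖c‖ₑ * besovNorm s p η := by
  have h_pow : (‖c‖ₑ ^ p) ^ p⁻¹ = ‖c‖ₑ := ENNReal.rpow_rpow_inv hp.ne' _
  have hc : ‖c‖ₑ ^ p ≠ ∞ := ENNReal.rpow_ne_top_of_nonneg hp.le enorm_ne_top
  simp only [besovNorm, gagliardoEnergy, ← mul_sub, enorm_mul,
    ENNReal.mul_rpow_of_nonneg _ _ hp.le, lintegral_const_mul' _ _ hc,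
    ENNReal.mul_rpow_of_nonneg _ _ (inv_nonneg.2 hp.le), h_pow, mul_add]

lemma lintegral_enorm_convolution_rpow_le (hp : 1 < p) (hφ : Measurable φ)
    (hφ_le : ∫⁻ x, ‖φ x‖ₑ ≤ 1) (hη : Measurable η) :
    ∫⁻ x, ‖(φ ⋆ η) x‖ₑ ^ p ≤ ∫⁻ x, ‖η x‖ₑ ^ p := by
  calc ∫⁻ x, ‖(φ ⋆ η) x‖ₑ ^ p ≤ ∫⁻ x, (∫⁻ y, ‖φ y‖ₑ * ‖η (x - y)‖ₑ) ^ p := by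
        gcongr with x
        simpa only [convolution_def, ContinuousLinearMap.lsmul_apply, smul_eq_mul, enorm_mul]
          using enorm_integral_le_lintegral_enorm (fun y => φ y * η (x - y))
    _ ≤ (∫⁻ x, ‖φ x‖ₑ) ^ p * ∫⁻ x, ‖η x‖ₑ ^ p :=
        lintegral_rpow_lintegral_mul_sub_le hp hφ.enorm hη.enorm
    _ ≤ ∫⁻ x, ‖η x‖ₑ ^ p :=
        mul_le_of_le_one_left' (ENNReal.rpow_le_one hφ_le (by linarith))

lemma besovNorm_convolution_le (s : ℝ) (hp : 1 < p) (hφ : Measurable φ)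
    (hφ_le : ∫⁻ x, ‖φ x‖ₑ ≤ 1) (hη : Measurable η)
    (h_ex : ConvolutionExists φ η (ContinuousLinearMap.lsmul ℝ ℝ))
    (h_conv : Measurable (φ ⋆ η)) : besovNorm s p (φ ⋆ η) ≤ besovNorm s p η := by
  have : 0 < p := by linarith
  have h_diff : ∀ x h, (φ ⋆ η) (x + h) - (φ ⋆ η) x = (φ ⋆ fun z => η (z + h) - η z) x :=
    fun x h => by
      simp only [convolution_def, ContinuousLinearMap.map_sub]
      rw [← integral_sub (h_ex _) (h_ex _)]
      simp only [add_sub_right_comm]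
  unfold besovNorm
  rw [gagliardoEnergy_eq_lintegral_lintegral s p hη,
    gagliardoEnergy_eq_lintegral_lintegral s p h_conv]
  gcongr ?_ ^ _ + ?_ ^ _
  · exact lintegral_enorm_convolution_rpow_le hp hφ hφ_le hη
  · refine lintegral_mono fun h => ?_
    simp only [h_diff]
    exact lintegral_enorm_convolution_rpow_le hp hφ hφ_le (by fun_prop)

lemma enorm_mul_sub_mul_le {a a' b b' : ℝ} (ha' : ‖a'‖ₑ ≤ 1) :
    ‖a' * b' - a * b‖ₑ ≤ ‖b' - b‖ₑ + ‖a' - a‖ₑ * ‖b‖ₑ := by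
  rw [show a' * b' - a * b = a' * (b' - b) + (a' - a) * b by ring]
  refine (enorm_add_le _ _).trans ?_
  rw [enorm_mul, enorm_mul]
  gcongr
  exact mul_le_of_le_one_left' ha'

lemma gagliardoEnergy_mul_le [Nontrivial E] (hs : 0 < s) (hs1 : s < 1) (hp : 1 ≤ p) (L : ℝ≥0) :
    ∃ C : ℝ≥0, ∀ χ η : E → ℝ, Measurable η → (∀ x, ‖χ x‖ₑ ≤ 1) →
      (∀ x h, ‖χ (x + h) - χ x‖ₑ ≤ L * ENNReal.ofReal (min 1 ‖h‖)) →
      gagliardoEnergy s p (fun x => χ x * η x) ^ p⁻¹ ≤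
        gagliardoEnergy s p η ^ p⁻¹ + C * (∫⁻ x, ‖η x‖ₑ ^ p) ^ p⁻¹ := by
  have hp0 : 0 < p := by linarith
  obtain ⟨C, hC⟩ := lintegral_min_one_rpow_gagliardoMeasure_le (E := E) (θ := s * p) (m := p)
    (by positivity) (by nlinarith)
  have hC : ∫⁻ h : E, ENNReal.ofReal (min 1 ‖h‖) ^ p ∂gagliardoMeasure (s * p) ≤ C := by
    simpa using hC 1 one_pos
  refine ⟨L * C ^ p⁻¹, fun χ η hη hχ_le hχ_lip => ?_⟩
  have h_leibniz : ∀ x h, ‖χ (x + h) * η (x + h) - χ x * η x‖ₑ ≤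
      ‖η (x + h) - η x‖ₑ + L * ENNReal.ofReal (min 1 ‖h‖) * ‖η x‖ₑ := fun x h => by
    refine (enorm_mul_sub_mul_le (hχ_le _)).trans ?_
    gcongr
    exact hχ_lip x h
  have h_cross : ∫⁻ z : E × E, (L * ENNReal.ofReal (min 1 ‖z.1‖) * ‖η z.2‖ₑ) ^ p
        ∂(gagliardoMeasure (s * p)).prod volume ≤ (L * C ^ p⁻¹) ^ p * ∫⁻ x, ‖η x‖ₑ ^ p := by
    simp only [ENNReal.mul_rpow_of_nonneg _ _ hp0.le]
    rw [lintegral_prod_mul (f := fun h => L ^ p * ENNReal.ofReal (min 1 ‖h‖) ^ p)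
      (g := fun x => ‖η x‖ₑ ^ p) (by fun_prop) (by fun_prop), lintegral_const_mul _ (by fun_prop),
      ENNReal.rpow_inv_rpow hp0.ne']
    gcongr
  calc gagliardoEnergy s p (fun x => χ x * η x) ^ p⁻¹
      ≤ (∫⁻ z : E × E, (‖η (z.2 + z.1) - η z.2‖ₑ +
            L * ENNReal.ofReal (min 1 ‖z.1‖) * ‖η z.2‖ₑ) ^ p
          ∂(gagliardoMeasure (s * p)).prod volume) ^ p⁻¹ := by
        unfold gagliardoEnergy
        gcongr
        exact h_leibniz _ _
    _ ≤ gagliardoEnergy s p η ^ p⁻¹ +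
          (∫⁻ z : E × E, (L * ENNReal.ofReal (min 1 ‖z.1‖) * ‖η z.2‖ₑ) ^ p
            ∂(gagliardoMeasure (s * p)).prod volume) ^ p⁻¹ := by
        have h_minkowski := ENNReal.lintegral_Lp_add_le
          (μ := (gagliardoMeasure (s * p)).prod volume)
          (f := fun z : E × E => ‖η (z.2 + z.1) - η z.2‖ₑ)
          (g := fun z => L * ENNReal.ofReal (min 1 ‖z.1‖) * ‖η z.2‖ₑ)
          (by fun_prop) (by fun_prop) hp
        simpa only [one_div, Pi.add_apply, gagliardoEnergy] using h_minkowski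
    _ ≤ gagliardoEnergy s p η ^ p⁻¹ + ((L * C ^ p⁻¹) ^ p * ∫⁻ x, ‖η x‖ₑ ^ p) ^ p⁻¹ := by gcongr
    _ = gagliardoEnergy s p η ^ p⁻¹ + ↑(L * C ^ p⁻¹) * (∫⁻ x, ‖η x‖ₑ ^ p) ^ p⁻¹ := by
        rw [ENNReal.mul_rpow_of_nonneg _ _ (by positivity), ENNReal.rpow_rpow_inv hp0.ne',
          ENNReal.coe_mul, ENNReal.coe_rpow_of_nonneg _ (by positivity)]

lemma besovNorm_mul_le [Nontrivial E] (hs : 0 < s) (hs1 : s < 1) (hp : 1 ≤ p) (L : ℝ≥0) :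
    ∃ C : ℝ≥0, ∀ χ η : E → ℝ, Measurable η → (∀ x, ‖χ x‖ₑ ≤ 1) →
      (∀ x h, ‖χ (x + h) - χ x‖ₑ ≤ L * ENNReal.ofReal (min 1 ‖h‖)) →
      besovNorm s p (fun x => χ x * η x) ≤ C * besovNorm s p η := by
  obtain ⟨C, hC⟩ := gagliardoEnergy_mul_le (E := E) hs hs1 hp L
  refine ⟨1 + C, fun χ η hη hχ_le hχ_lip => ?_⟩
  have h_Lp : (∫⁻ x, ‖χ x * η x‖ₑ ^ p) ^ p⁻¹ ≤ (∫⁻ x, ‖η x‖ₑ ^ p) ^ p⁻¹ := by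
    gcongr with x
    rw [enorm_mul]
    exact mul_le_of_le_one_left' (hχ_le x)
  calc besovNorm s p (fun x => χ x * η x)
      ≤ (∫⁻ x, ‖η x‖ₑ ^ p) ^ p⁻¹ +
          (gagliardoEnergy s p η ^ p⁻¹ + C * (∫⁻ x, ‖η x‖ₑ ^ p) ^ p⁻¹) :=
        add_le_add h_Lp (hC χ η hη hχ_le hχ_lip)
    _ = besovNorm s p η + C * (∫⁻ x, ‖η x‖ₑ ^ p) ^ p⁻¹ := by rw [besovNorm, add_assoc]
    _ ≤ besovNorm s p η + C * besovNorm s p η := by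
        gcongr
        exact le_self_add
    _ = ↑(1 + C) * besovNorm s p η := by
        push_cast
        ring

lemma gagliardoEnergy_ne_top [Nontrivial E] (hs : 0 < s) (hs1 : s < 1) (hp : 1 ≤ p)
    (hη : ContDiff ℝ 1 η) (hη_supp : HasCompactSupport η) : gagliardoEnergy s p η ≠ ∞ := by
  have hp0 : 0 < p := by linarith
  have hη_meas := hη.continuous.measurable
  obtain ⟨L, hL⟩ := exists_enorm_add_sub_le_min_one_norm hη hη_supp
  obtain ⟨C, hC⟩ := lintegral_min_one_rpow_gagliardoMeasure_le (E := E) (θ := s * p) (m := p)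
    (by positivity) (by nlinarith)
  have hC : ∫⁻ h : E, ENNReal.ofReal (min 1 ‖h‖) ^ p ∂gagliardoMeasure (s * p) ≤ C := by
    simpa using hC 1 one_pos
  set S := tsupport η
  have hS : MeasurableSet S := (isClosed_tsupport η).measurableSet
  have h_incr : ∀ h, ∫⁻ x, ‖η (x + h) - η x‖ₑ ^ p ≤
      (L * ENNReal.ofReal (min 1 ‖h‖)) ^ p * (2 * volume S) := fun h => by
    set c := (L * ENNReal.ofReal (min 1 ‖h‖)) ^ p with hc
    calc ∫⁻ x, ‖η (x + h) - η x‖ₑ ^ p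
        ≤ ∫⁻ x, (S.indicator (fun _ => c) (x + h) + S.indicator (fun _ => c) x) := by
          refine lintegral_mono fun x => ?_
          have h_le : ‖η (x + h) - η x‖ₑ ^ p ≤ c := by
            rw [hc]
            gcongr
            exact hL x h
          by_cases hxh : x + h ∈ S
          · exact h_le.trans (by simp [hxh])
          by_cases hx : x ∈ S
          · exact h_le.trans (by simp [hx])
          simp [image_eq_zero_of_notMem_tsupport hxh, image_eq_zero_of_notMem_tsupport hx, hp0]
      _ = c * (2 * volume S) := by
          rw [lintegral_add_right _ (measurable_const.indicator hS),
            lintegral_add_right_eq_self (fun x => S.indicator (fun _ => c) x),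
            lintegral_indicator_const hS]
          ring
  have h_le : gagliardoEnergy s p η ≤ L ^ p * C * (2 * volume S) := by
    rw [gagliardoEnergy_eq_lintegral_lintegral s p hη_meas]
    refine (lintegral_mono h_incr).trans ?_
    simp only [ENNReal.mul_rpow_of_nonneg _ _ hp0.le]
    rw [lintegral_mul_const _ (by fun_prop), lintegral_const_mul _ (by fun_prop)]
    gcongr
  have hS_top : volume S ≠ ∞ := hη_supp.isCompact.measure_lt_top.ne
  exact ne_top_of_le_ne_top (by finiteness) h_le

lemma exists_seq_smooth_cutoff (E : Type*) [NormedAddCommGroup E] [InnerProductSpace ℝ E]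
    [FiniteDimensional ℝ E] :
    ∃ (L : ℝ≥0) (χ : ℕ → E → ℝ),
      (∀ n, ContDiff ℝ (⊤ : ℕ∞) (χ n)) ∧ (∀ n, HasCompactSupport (χ n)) ∧
      (∀ n x, |χ n x| ≤ 1) ∧
      (∀ n x h, ‖χ n (x + h) - χ n x‖ₑ ≤ L * ENNReal.ofReal (min 1 ‖h‖)) ∧
      ∀ x, Tendsto (fun n => χ n x) atTop (𝓝 1) := by
  let b : ContDiffBump (0 : E) := ⟨1, 2, one_pos, one_lt_two⟩
  obtain ⟨L, hL⟩ := exists_enorm_add_sub_le_min_one_norm b.contDiff b.hasCompactSupport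
  have h_inv : ∀ n : ℕ, 0 < ((n : ℝ) + 1)⁻¹ := fun n => by positivity
  refine ⟨L, fun n x => b (((n : ℝ) + 1)⁻¹ • x), fun n => b.contDiff.comp (contDiff_const_smul _),
    fun n => b.hasCompactSupport.comp_smul (h_inv n).ne',
    fun n x => abs_le.2 ⟨by linarith [b.nonneg (x := ((n : ℝ) + 1)⁻¹ • x)], b.le_one⟩,
    fun n x h => ?_, fun x => ?_⟩
  · simp only [smul_add]
    refine (hL _ _).trans ?_
    gcongr
    rw [norm_smul, norm_of_nonneg (h_inv n).le]
    exact mul_le_of_le_one_left (norm_nonneg _) (inv_le_one_of_one_le₀ (by simp))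
  · obtain ⟨n₀, hn₀⟩ := exists_nat_ge ‖x‖
    refine tendsto_const_nhds.congr' ?_
    filter_upwards [eventually_ge_atTop n₀] with n hn
    have h_norm : ‖x‖ ≤ n + 1 := by linarith [(Nat.cast_le (α := ℝ)).2 hn]
    refine (b.one_of_mem_closedBall ?_).symm
    rw [mem_closedBall_zero_iff, norm_smul, norm_of_nonneg (h_inv n).le]
    exact (inv_mul_le_iff₀ (by positivity)).2 (by simpa [b] using h_norm)

lemma exists_seq_mollifier (E : Type*) [NormedAddCommGroup E] [InnerProductSpace ℝ E]
    [FiniteDimensional ℝ E] [MeasurableSpace E] [BorelSpace E] :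
    ∃ φ : ℕ → E → ℝ,
      (∀ n, ContDiff ℝ (⊤ : ℕ∞) (φ n)) ∧ (∀ n, HasCompactSupport (φ n)) ∧
      (∀ n, ∫⁻ x, ‖φ n x‖ₑ = 1) ∧
      ∀ η : E → ℝ, Continuous η → ∀ x, Tendsto (fun n => (φ n ⋆ η) x) atTop (𝓝 (η x)) := by
  let b : ℕ → ContDiffBump (0 : E) := fun n => ⟨1 / (n + 2), 1 / (n + 1), by positivity, by
    gcongr
    norm_num⟩
  refine ⟨fun n => (b n).normed volume, fun n => (b n).contDiff_normed,
    fun n => (b n).hasCompactSupport_normed, fun n => ?_, fun η hη x =>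
    ContDiffBump.convolution_tendsto_right_of_continuous tendsto_one_div_add_atTop_nhds_zero_nat
      hη x⟩
  simp_rw [enorm_of_nonneg ((b n).nonneg_normed _)]
  rw [← ofReal_integral_eq_lintegral_ofReal (b n).integrable_normed
    (ae_of_all _ (b n).nonneg_normed), (b n).integral_normed, ENNReal.ofReal_one]

lemma abs_convolution_le (hφ : ∫⁻ x, ‖φ x‖ₑ ≤ 1) {B : ℝ} (hη : ∀ x, |η x| ≤ B) (x : E) :
    |(φ ⋆ η) x| ≤ B := by
  have hB : 0 ≤ B := (abs_nonneg _).trans (hη 0)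
  rw [← norm_eq_abs, ← ENNReal.ofReal_le_ofReal_iff hB, ofReal_norm]
  calc ‖(φ ⋆ η) x‖ₑ
      ≤ ∫⁻ y, ‖φ y * η (x - y)‖ₑ := by
        simpa only [convolution_def, ContinuousLinearMap.lsmul_apply, smul_eq_mul]
          using enorm_integral_le_lintegral_enorm (fun y => φ y * η (x - y))
    _ ≤ ∫⁻ y, ‖φ y‖ₑ * ENNReal.ofReal B := by
        gcongr with y
        rw [enorm_mul, ← ofReal_norm (η _), norm_eq_abs]
        gcongr
        exact hη _
    _ ≤ ENNReal.ofReal B := by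
        rw [lintegral_mul_const' _ _ ENNReal.ofReal_ne_top]
        exact mul_le_of_le_one_left' hφ

lemma exists_seq_smooth_tendsto_of_continuous [Nontrivial E] (hs : 0 < s) (hs1 : s < 1)
    (hp : 1 < p) :
    ∃ C : ℝ≥0, ∀ (η : E → ℝ) (B : ℝ), Continuous η → (∀ x, |η x| ≤ B) →
      ∃ ζ : ℕ → E → ℝ, (∀ n, ContDiff ℝ (⊤ : ℕ∞) (ζ n)) ∧ (∀ n, HasCompactSupport (ζ n)) ∧
        (∀ n x, |ζ n x| ≤ B) ∧ (∀ n, besovNorm s p (ζ n) ≤ C * besovNorm s p η) ∧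
        ∀ x, Tendsto (fun n => ζ n x) atTop (𝓝 (η x)) := by
  obtain ⟨L, χ, hχ_smooth, hχ_supp, hχ_le, hχ_lip, hχ_lim⟩ := exists_seq_smooth_cutoff E
  obtain ⟨φ, hφ_smooth, hφ_supp, hφ_int, hφ_lim⟩ := exists_seq_mollifier E
  obtain ⟨C, hC⟩ := besovNorm_mul_le (E := E) hs hs1 hp.le L
  refine ⟨C, fun η B hη hηB => ?_⟩
  have h_smooth : ∀ n, ContDiff ℝ (⊤ : ℕ∞) (φ n ⋆ η) := fun n =>
    (hφ_supp n).contDiff_convolution_left _ (hφ_smooth n) hη.locallyIntegrable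
  have h_ex : ∀ n, ConvolutionExists (φ n) η (ContinuousLinearMap.lsmul ℝ ℝ) := fun n =>
    (hφ_supp n).convolutionExists_left _ (hφ_smooth n).continuous hη.locallyIntegrable
  refine ⟨fun n x => χ n x * (φ n ⋆ η) x, fun n => (hχ_smooth n).mul (h_smooth n),
    fun n => (hχ_supp n).mul_right, fun n x => ?_, fun n => ?_,
    fun x => by simpa using (hχ_lim x).mul (hφ_lim η hη x)⟩
  · rw [abs_mul]
    exact (mul_le_of_le_one_left (abs_nonneg _) (hχ_le n x)).trans
      (abs_convolution_le (hφ_int n).le hηB x)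
  · refine (hC _ _ (h_smooth n).continuous.measurable (fun x => ?_) (hχ_lip n)).trans ?_
    · simpa [← ofReal_norm] using hχ_le n x
    · gcongr
      exact besovNorm_convolution_le s hp (hφ_smooth n).continuous.measurable (hφ_int n).le
        hη.measurable (h_ex n) (h_smooth n).continuous.measurable

end FractionalSobolev

section DualNorm

variable {E : Type*} [NormedAddCommGroup E] [InnerProductSpace ℝ E] [FiniteDimensional ℝ E]
  [MeasurableSpace E] [BorelSpace E] {s p : ℝ} {η ζ : E → ℝ} {μ : Measure E}

/-- The norm `‖μ‖_*` of a measure `μ` as a functional on smooth compactly supported functions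
normed by `besovNorm s p`. -/
def dualBesovNorm (s p : ℝ) (μ : Measure E) : ℝ≥0∞ :=
  ⨆ (ζ : E → ℝ) (_ : ContDiff ℝ (⊤ : ℕ∞) ζ ∧ HasCompactSupport ζ ∧ besovNorm s p ζ ≤ 1),
    ‖∫ x, ζ x ∂μ‖ₑ

lemma lintegral_enorm_rpow_ne_top (hp : 0 < p) (hζ : Continuous ζ) (hζ_supp : HasCompactSupport ζ) :
    ∫⁻ x, ‖ζ x‖ₑ ^ p ≠ ∞ := by
  have h := (hζ.memLp_of_hasCompactSupport (μ := volume) (p := ENNReal.ofReal p) hζ_supp).2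
  have hp0 : ENNReal.ofReal p ≠ 0 := by simpa using hp
  simpa only [ENNReal.toReal_ofReal hp.le] using
    (lintegral_rpow_enorm_lt_top_of_eLpNorm_lt_top hp0 ENNReal.ofReal_ne_top h).ne

lemma besovNorm_ne_top [Nontrivial E] (hs : 0 < s) (hs1 : s < 1) (hp : 1 ≤ p)
    (hζ : ContDiff ℝ 1 ζ) (hζ_supp : HasCompactSupport ζ) : besovNorm s p ζ ≠ ∞ := by
  have hp0 : 0 < p := by linarith
  refine ENNReal.add_ne_top.2 ⟨?_, ?_⟩ <;> refine ENNReal.rpow_ne_top_of_nonneg (by positivity) ?_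
  · exact lintegral_enorm_rpow_ne_top hp0 hζ.continuous hζ_supp
  · exact gagliardoEnergy_ne_top hs hs1 hp hζ hζ_supp

lemma eq_zero_of_besovNorm_eq_zero (hp : 0 < p) (hζ : Continuous ζ) (h : besovNorm s p ζ = 0) :
    ζ = 0 := by
  have h_int : ∫⁻ x, ‖ζ x‖ₑ ^ p = 0 := by
    simpa [hp, hp.not_gt] using (add_eq_zero.1 h).1
  rw [lintegral_eq_zero_iff (by fun_prop)] at h_int
  refine (hζ.ae_eq_iff_eq volume continuous_zero).1 (h_int.mono fun x hx => ?_)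
  simpa [hp, hp.not_gt] using hx

lemma enorm_integral_le_dualBesovNorm_mul [Nontrivial E] (hs : 0 < s) (hs1 : s < 1) (hp : 1 ≤ p)
    (hζ : ContDiff ℝ (⊤ : ℕ∞) ζ) (hζ_supp : HasCompactSupport ζ) :
    ‖∫ x, ζ x ∂μ‖ₑ ≤ dualBesovNorm s p μ * besovNorm s p ζ := by
  have hp0 : 0 < p := by linarith
  have h_top := besovNorm_ne_top hs hs1 hp (hζ.of_le (by norm_cast)) hζ_supp
  obtain h0 | h0 := eq_or_ne (besovNorm s p ζ) 0
  · simp [eq_zero_of_besovNorm_eq_zero hp0 hζ.continuous h0]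
  set b := (besovNorm s p ζ).toReal
  have hb : 0 < b := ENNReal.toReal_pos h0 h_top
  have hb_eq : ‖b⁻¹‖ₑ = (besovNorm s p ζ)⁻¹ := by
    rw [Real.enorm_of_nonneg (by positivity), ENNReal.ofReal_inv_of_pos hb,
      ENNReal.ofReal_toReal h_top]
  have h_unit : besovNorm s p (fun x => b⁻¹ * ζ x) ≤ 1 := by
    rw [besovNorm_const_mul s hp0, hb_eq, ENNReal.inv_mul_cancel h0 h_top]
  have h_le : ‖∫ x, b⁻¹ * ζ x ∂μ‖ₑ ≤ dualBesovNorm s p μ :=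
    le_iSup₂_of_le (fun x => b⁻¹ * ζ x) ⟨contDiff_const.mul hζ, hζ_supp.mul_left, h_unit⟩ le_rfl
  rwa [integral_const_mul, enorm_mul, hb_eq, mul_comm, ← div_eq_mul_inv,
    ENNReal.div_le_iff h0 h_top] at h_le

theorem enorm_integral_le_dualBesovNorm_mul_of_continuous [Nontrivial E] (hs : 0 < s)
    (hs1 : s < 1) (hp : 1 < p) :
    ∃ C : ℝ≥0, ∀ (μ : Measure E) [IsFiniteMeasure μ] (η : E → ℝ) (B : ℝ), Continuous η →
      (∀ x, |η x| ≤ B) → ‖∫ x, η x ∂μ‖ₑ ≤ C * dualBesovNorm s p μ * besovNorm s p η := by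
  obtain ⟨C, hC⟩ := exists_seq_smooth_tendsto_of_continuous (E := E) hs hs1 hp
  refine ⟨C, fun μ _ η B hη hηB => ?_⟩
  obtain ⟨ζ, hζ_smooth, hζ_supp, hζ_le, hζ_norm, hζ_lim⟩ := hC η B hη hηB
  have h_lim : Tendsto (fun n => ∫ x, ζ n x ∂μ) atTop (𝓝 (∫ x, η x ∂μ)) :=
    tendsto_integral_of_dominated_convergence (fun _ => B)
      (fun n => (hζ_smooth n).continuous.aestronglyMeasurable) (integrable_const B)
      (fun n => Eventually.of_forall (hζ_le n)) (Eventually.of_forall hζ_lim)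
  refine le_of_tendsto h_lim.enorm (Eventually.of_forall fun n => ?_)
  calc ‖∫ x, ζ n x ∂μ‖ₑ ≤ dualBesovNorm s p μ * besovNorm s p (ζ n) :=
        enorm_integral_le_dualBesovNorm_mul hs hs1 hp.le (hζ_smooth n) (hζ_supp n)
    _ ≤ dualBesovNorm s p μ * (C * besovNorm s p η) := by gcongr; exact hζ_norm n
    _ = C * dualBesovNorm s p μ * besovNorm s p η := by ring

end DualNorm

section HeatPotential

variable {E : Type*} [NormedAddCommGroup E] [InnerProductSpace ℝ E] [MeasurableSpace E]

/-- The heat potential `ℍ[μ](x, t)` at the space-time point `(t, x)`, time being the first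
coordinate. -/
def heatPotential (μ : Measure E) (v : ℝ × E) : ℝ≥0∞ :=
  ∫⁻ y, ‖heatKernel v.1 (v.2 - y)‖ₑ ∂μ

lemma heatPotential_ne_top (μ : Measure E) [IsFiniteMeasure μ] {t : ℝ} (ht : 0 < t) (x : E) :
    heatPotential μ (t, x) ≠ ∞ := by
  have h_le : ∀ y, ‖heatKernel t (x - y)‖ₑ ≤
      ENNReal.ofReal ((4 * π * t) ^ (-(finrank ℝ E : ℝ) / 2)) := fun y => by
    rw [Real.enorm_of_nonneg (heatKernel_pos ht _).le]
    exact ENNReal.ofReal_le_ofReal (heatKernel_le_rpow ht _)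
  refine ne_top_of_le_ne_top ?_ (lintegral_mono h_le)
  rw [lintegral_const]
  finiteness

end HeatPotential

section StripMeasure

variable {E : Type*} [NormedAddCommGroup E] [InnerProductSpace ℝ E] [FiniteDimensional ℝ E]
  [MeasurableSpace E] [BorelSpace E] {p q s b B T : ℝ} {F : ℝ × E → ℝ}

/-- Lebesgue measure on the space-time strip `(0, T] × E`. -/
def stripMeasure (T : ℝ) : Measure (ℝ × E) :=
  (volume.restrict (Ioc 0 T)).prod volume

instance : SigmaFinite (stripMeasure T : Measure (ℝ × E)) := by
  unfold stripMeasure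
  infer_instance

lemma ae_stripMeasure (T : ℝ) : ∀ᵐ v ∂(stripMeasure T : Measure (ℝ × E)), v.1 ∈ Ioc 0 T :=
  Measure.quasiMeasurePreserving_fst.ae (ae_restrict_mem measurableSet_Ioc)

lemma lintegral_stripMeasure (T : ℝ) {f : ℝ × E → ℝ≥0∞} (hf : Measurable f) :
    ∫⁻ v, f v ∂stripMeasure T = ∫⁻ t in Ioc 0 T, ∫⁻ x, f (t, x) :=
  lintegral_prod _ hf.aemeasurable

lemma measurable_heatPotential (μ : Measure E) [SFinite μ] : Measurable (heatPotential μ) := by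
  unfold heatPotential
  fun_prop

/-- The formal adjoint of `heatPotential`, which sends a function on the strip `(0, T] × E` to a
function on `E`. -/
def adjointHeatPotential (T : ℝ) (F : ℝ × E → ℝ) (x : E) : ℝ :=
  ∫ v, heatKernel v.1 (x - v.2) * F v ∂stripMeasure T

lemma lintegral_enorm_heatKernel_stripMeasure (T : ℝ) (x : E) :
    ∫⁻ v, ‖heatKernel v.1 (x - v.2)‖ₑ ∂stripMeasure T = ENNReal.ofReal T := by
  rw [lintegral_stripMeasure T (by fun_prop), setLIntegral_congr_fun measurableSet_Ioc
    fun t ht => lintegral_enorm_heatKernel_sub_left ht.1 x]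
  simp

lemma integrable_heatKernel_mul (hF : Measurable F) (hFB : ∀ v, |F v| ≤ B) (x : E) :
    Integrable (fun v => heatKernel v.1 (x - v.2) * F v) (stripMeasure T) := by
  have h_meas : Measurable fun v : ℝ × E => heatKernel v.1 (x - v.2) := by fun_prop
  refine Integrable.mul_bdd (c := B) ⟨h_meas.aestronglyMeasurable, ?_⟩ hF.aestronglyMeasurable
    (Eventually.of_forall hFB)
  rw [hasFiniteIntegral_iff_enorm, lintegral_enorm_heatKernel_stripMeasure]
  exact ENNReal.ofReal_lt_top

lemma enorm_adjointHeatPotential_le (F : ℝ × E → ℝ) (x : E) :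
    ‖adjointHeatPotential T F x‖ₑ ≤
      ∫⁻ v, ‖heatKernel v.1 (x - v.2)‖ₑ * ‖F v‖ₑ ∂stripMeasure T := by
  simpa only [adjointHeatPotential, enorm_mul] using
    enorm_integral_le_lintegral_enorm (μ := stripMeasure T)
      fun v => heatKernel v.1 (x - v.2) * F v

lemma enorm_adjointHeatPotential_add_sub_le (hF : Measurable F) (hFB : ∀ v, |F v| ≤ B) (x h : E) :
    ‖adjointHeatPotential T F (x + h) - adjointHeatPotential T F x‖ₑ ≤
      ∫⁻ v, ‖heatKernel v.1 (x + h - v.2) - heatKernel v.1 (x - v.2)‖ₑ * ‖F v‖ₑ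
        ∂stripMeasure T := by
  unfold adjointHeatPotential
  rw [← integral_sub (integrable_heatKernel_mul hF hFB _) (integrable_heatKernel_mul hF hFB _)]
  simpa only [← sub_mul, enorm_mul] using enorm_integral_le_lintegral_enorm (μ := stripMeasure T)
    fun v => heatKernel v.1 (x + h - v.2) * F v - heatKernel v.1 (x - v.2) * F v

lemma abs_adjointHeatPotential_le (hFB : ∀ v, |F v| ≤ B) (x : E) :
    |adjointHeatPotential T F x| ≤ (ENNReal.ofReal T * ENNReal.ofReal B).toReal := by
  have h : ‖adjointHeatPotential T F x‖ₑ ≤ ENNReal.ofReal T * ENNReal.ofReal B :=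
    calc ‖adjointHeatPotential T F x‖ₑ
        ≤ ∫⁻ v, ‖heatKernel v.1 (x - v.2)‖ₑ * ‖F v‖ₑ ∂stripMeasure T :=
          enorm_adjointHeatPotential_le F x
      _ ≤ ∫⁻ v, ‖heatKernel v.1 (x - v.2)‖ₑ * ENNReal.ofReal B ∂stripMeasure T := by
          gcongr with v
          exact Real.enorm_eq_ofReal_abs (F v) ▸ ENNReal.ofReal_le_ofReal (hFB v)
      _ = ENNReal.ofReal T * ENNReal.ofReal B := by
          rw [lintegral_mul_const _ (by fun_prop), lintegral_enorm_heatKernel_stripMeasure]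
  simpa using ENNReal.toReal_mono (by finiteness) h

lemma exists_lintegral_min_one_mul_rpow_le (hb : 1 / 2 < b) (hb1 : b < 1) :
    ∃ C : ℝ≥0, ∀ r : ℝ, 0 < r →
      ∫⁻ t in Ioi 0, ENNReal.ofReal (min 1 (r / √t)) * ENNReal.ofReal (t ^ (-b)) ≤
        C * ENNReal.ofReal (r ^ (2 - 2 * b)) := by
  have : 0 < 1 - b := by linarith
  have : 0 < b - 1 / 2 := by linarith
  refine ⟨((1 - b)⁻¹ + (b - 1 / 2)⁻¹).toNNReal, fun r hr => ?_⟩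
  refine (setLIntegral_Ioi_le_of_le_rpow (A := 1) (B := ENNReal.ofReal r) (α := -b)
    (β := -b - 1 / 2) (sq_pos_of_pos hr) (by linarith) (by linarith) (fun t _ _ => ?_)
    fun t ht => ?_).trans (le_of_eq ?_)
  · gcongr
    exact ENNReal.ofReal_le_one.2 (min_le_left _ _)
  · have ht0 : 0 < t := (sq_pos_of_pos hr).trans ht
    rw [← ENNReal.ofReal_mul (by positivity), ← ENNReal.ofReal_mul hr.le]
    refine ENNReal.ofReal_le_ofReal ?_
    calc min 1 (r / √t) * t ^ (-b) ≤ r / √t * t ^ (-b) := by gcongr; exact min_le_right _ _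
      _ = r * t ^ (-b - 1 / 2) := by
        rw [sqrt_eq_rpow, rpow_sub ht0]
        ring
  · have h_low : (r ^ 2) ^ (-b + 1) = r ^ (2 - 2 * b) := by
      rw [← rpow_natCast_mul hr.le]
      ring_nf
    have h_high : r * (r ^ 2) ^ (-b - 1 / 2 + 1) = r ^ (2 - 2 * b) := by
      rw [← rpow_natCast_mul hr.le, ← rpow_one_add' hr.le (by push_cast; linarith)]
      push_cast
      ring_nf
    rw [one_mul, ← ENNReal.ofReal_mul hr.le, ← mul_div_assoc, h_low, h_high,
      show -b + 1 = 1 - b by ring, show -(-b - 1 / 2) - 1 = b - 1 / 2 by ring,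
      ← ENNReal.ofReal_add (by positivity) (by positivity), ← ENNReal.ofReal_coe_nnreal,
      Real.coe_toNNReal _ (by positivity), ← ENNReal.ofReal_mul (by positivity)]
    congr 1
    ring

lemma lintegral_enorm_heatKernel_add_sub_mul_rpow_le (hb : 1 / 2 < b) (hb1 : b < 1) :
    ∃ C : ℝ≥0, ∀ (T : ℝ) (x h : E),
      ∫⁻ v, ‖heatKernel v.1 (x + h - v.2) - heatKernel v.1 (x - v.2)‖ₑ *
        ENNReal.ofReal (v.1 ^ (-b)) ∂stripMeasure T ≤ C * ENNReal.ofReal (‖h‖ ^ (2 - 2 * b)) := by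
  obtain ⟨C₁, hC₁⟩ := lintegral_enorm_heatKernel_add_sub_le (E := E)
  obtain ⟨C₂, hC₂⟩ := exists_lintegral_min_one_mul_rpow_le hb hb1
  refine ⟨C₁ * C₂, fun T x h => ?_⟩
  obtain rfl | hh := eq_or_ne h 0
  · simp
  have h_slice : ∀ t, 0 < t → ∫⁻ y, ‖heatKernel t (x + h - y) - heatKernel t (x - y)‖ₑ ≤
      C₁ * ENNReal.ofReal (min 1 (‖h‖ / √t)) := fun t ht => by
    simpa only [add_sub_right_comm, lintegral_sub_left_eq_self
      fun z => ‖heatKernel t (z + h) - heatKernel t z‖ₑ] using hC₁ t ht h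
  rw [lintegral_stripMeasure T (by fun_prop)]
  calc ∫⁻ t in Ioc 0 T, ∫⁻ y, ‖heatKernel t (x + h - y) - heatKernel t (x - y)‖ₑ *
        ENNReal.ofReal (t ^ (-b))
      ≤ ∫⁻ t in Ioc 0 T, C₁ * (ENNReal.ofReal (min 1 (‖h‖ / √t)) * ENNReal.ofReal (t ^ (-b))) := by
        refine setLIntegral_mono' measurableSet_Ioc fun t ht => ?_
        rw [lintegral_mul_const _ (by fun_prop), ← mul_assoc]
        gcongr
        exact h_slice t ht.1
    _ ≤ ∫⁻ t in Ioi 0, C₁ * (ENNReal.ofReal (min 1 (‖h‖ / √t)) * ENNReal.ofReal (t ^ (-b))) :=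
        lintegral_mono_set Ioc_subset_Ioi_self
    _ ≤ C₁ * (C₂ * ENNReal.ofReal (‖h‖ ^ (2 - 2 * b))) := by
        rw [lintegral_const_mul _ (by fun_prop)]
        gcongr
        exact hC₂ _ (norm_pos_iff.2 hh)
    _ = (C₁ * C₂ : ℝ≥0) * ENNReal.ofReal (‖h‖ ^ (2 - 2 * b)) := by
        rw [ENNReal.coe_mul, mul_assoc]

lemma exists_enorm_adjointHeatPotential_add_sub_le_rpow (T : ℝ) (hF : Measurable F)
    (hFB : ∀ v, |F v| ≤ B) :
    ∃ C : ℝ≥0, ∀ x h, ‖adjointHeatPotential T F (x + h) - adjointHeatPotential T F x‖ₑ ≤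
      C * ENNReal.ofReal (‖h‖ ^ (1 / 2 : ℝ)) := by
  obtain ⟨C, hC⟩ := lintegral_enorm_heatKernel_add_sub_mul_rpow_le (E := E) (b := 3 / 4)
    (by norm_num) (by norm_num)
  refine ⟨C * (B * T ^ (3 / 4 : ℝ)).toNNReal, fun x h => ?_⟩
  have h_weight : ∀ v : ℝ × E, v.1 ∈ Ioc 0 T →
      ‖F v‖ₑ ≤ ENNReal.ofReal (v.1 ^ (-(3 / 4) : ℝ)) * ENNReal.ofReal (B * T ^ (3 / 4 : ℝ)) := by
    intro v hv
    have hB : 0 ≤ B := (abs_nonneg _).trans (hFB v)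
    rw [Real.enorm_eq_ofReal_abs, ← ENNReal.ofReal_mul (rpow_nonneg hv.1.le _)]
    refine ENNReal.ofReal_le_ofReal ((hFB v).trans ?_)
    rw [rpow_neg hv.1.le, inv_mul_eq_div, le_div_iff₀ (rpow_pos_of_pos hv.1 _)]
    gcongr
    exacts [hv.1.le, hv.2]
  calc ‖adjointHeatPotential T F (x + h) - adjointHeatPotential T F x‖ₑ
      ≤ ∫⁻ v, ‖heatKernel v.1 (x + h - v.2) - heatKernel v.1 (x - v.2)‖ₑ * ‖F v‖ₑ
          ∂stripMeasure T := enorm_adjointHeatPotential_add_sub_le hF hFB x h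
    _ ≤ ∫⁻ v, ‖heatKernel v.1 (x + h - v.2) - heatKernel v.1 (x - v.2)‖ₑ *
          ENNReal.ofReal (v.1 ^ (-(3 / 4) : ℝ)) * ENNReal.ofReal (B * T ^ (3 / 4 : ℝ))
          ∂stripMeasure T := by
        refine lintegral_mono_ae ((ae_stripMeasure T).mono fun v hv => ?_)
        rw [mul_assoc]
        gcongr
        exact h_weight v hv
    _ ≤ C * ENNReal.ofReal (‖h‖ ^ (2 - 2 * (3 / 4) : ℝ)) *
          ENNReal.ofReal (B * T ^ (3 / 4 : ℝ)) := by
        rw [lintegral_mul_const _ (by fun_prop)]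
        gcongr
        exact hC T x h
    _ = (C * (B * T ^ (3 / 4 : ℝ)).toNNReal : ℝ≥0) * ENNReal.ofReal (‖h‖ ^ (1 / 2 : ℝ)) := by
        rw [ENNReal.coe_mul, mul_right_comm]
        norm_num [ENNReal.ofReal]

lemma continuous_adjointHeatPotential (T : ℝ) (hF : Measurable F) (hFB : ∀ v, |F v| ≤ B) :
    Continuous (adjointHeatPotential T F) := by
  obtain ⟨C, hC⟩ := exists_enorm_adjointHeatPotential_add_sub_le_rpow T hF hFB
  have h_holder : HolderWith C (1 / 2) (adjointHeatPotential T F) := fun y x => by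
    rw [edist_eq_enorm_sub, edist_eq_enorm_sub, ← ofReal_norm (y - x),
      ENNReal.ofReal_rpow_of_nonneg (norm_nonneg _) (by positivity)]
    simpa only [add_sub_cancel, NNReal.coe_div, NNReal.coe_one, NNReal.coe_ofNat] using
      hC x (y - x)
  exact h_holder.continuous (by norm_num)

lemma lintegral_enorm_adjointHeatPotential_rpow_le (T : ℝ) (hp : 1 < p) (hF : Measurable F) :
    ∫⁻ x, ‖adjointHeatPotential T F x‖ₑ ^ p ≤
      ENNReal.ofReal T ^ (p - 1) * ∫⁻ v, ‖F v‖ₑ ^ p ∂stripMeasure T := by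
  have h_schur := lintegral_rpow_lintegral_le_of_schur (μ := volume) (ν := stripMeasure T) hp
    (K := fun (x : E) v => ‖heatKernel v.1 (x - v.2)‖ₑ) (F := fun v => ‖F v‖ₑ) (W := fun _ => 1)
    (g := fun _ => 1) (C := ENNReal.ofReal T) (D := 1) (by unfold Function.uncurry; fun_prop)
    (by fun_prop) (by fun_prop) (by fun_prop) (by simp) (by simp)
    (by simp [lintegral_enorm_heatKernel_stripMeasure])
    ((ae_stripMeasure T).mono fun v hv => by
      simp [lintegral_enorm_heatKernel_sub_right hv.1])
  rw [mul_one] at h_schur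
  refine (lintegral_mono fun x => ?_).trans h_schur
  gcongr
  exact enorm_adjointHeatPotential_le F x

lemma lintegral_norm_rpow_mul_gagliardoMeasure [Nontrivial E] (θ a : ℝ) {f : E → ℝ≥0∞}
    (hf : Measurable f) :
    ∫⁻ h, f h * ENNReal.ofReal (‖h‖ ^ a) ∂gagliardoMeasure θ =
      ∫⁻ h, f h ∂gagliardoMeasure (θ - a) := by
  rw [lintegral_gagliardoMeasure θ (by fun_prop), lintegral_gagliardoMeasure _ hf]
  have h_ne : ∀ᵐ h : E, h ≠ 0 := compl_mem_ae_iff.2 (measure_singleton 0)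
  refine lintegral_congr_ae (h_ne.mono fun h hh => ?_)
  have hh0 : 0 < ‖h‖ := norm_pos_iff.2 hh
  beta_reduce
  rw [mul_left_comm, mul_comm, ← ENNReal.ofReal_mul (by positivity), ← rpow_add hh0]
  ring_nf

lemma exists_lintegral_enorm_heatKernel_add_sub_gagliardoMeasure_le [Nontrivial E] {θ a : ℝ}
    (haθ : a < θ) (hθ : θ < 1 + a) :
    ∃ C : ℝ≥0, ∀ v : ℝ × E, 0 < v.1 →
      ∫⁻ u, ‖heatKernel v.1 (u.2 + u.1 - v.2) - heatKernel v.1 (u.2 - v.2)‖ₑ *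
        ENNReal.ofReal (‖u.1‖ ^ a) ∂(gagliardoMeasure θ).prod volume ≤
      C * ENNReal.ofReal (v.1 ^ ((a - θ) / 2)) := by
  obtain ⟨C₁, hC₁⟩ := lintegral_enorm_heatKernel_add_sub_le (E := E)
  obtain ⟨C₂, hC₂⟩ := lintegral_min_one_rpow_gagliardoMeasure_le (E := E) (θ := θ - a) (m := 1)
    (by linarith) (by linarith)
  refine ⟨C₁ * C₂, fun v hv => ?_⟩
  have h_slice : ∀ h, ∫⁻ x, ‖heatKernel v.1 (x + h - v.2) - heatKernel v.1 (x - v.2)‖ₑ ≤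
      C₁ * ENNReal.ofReal (min 1 (‖h‖ / √v.1)) := fun h => by
    simpa only [add_sub_right_comm, lintegral_sub_right_eq_self
      fun z => ‖heatKernel v.1 (z + h) - heatKernel v.1 z‖ₑ] using hC₁ v.1 hv h
  calc ∫⁻ u, ‖heatKernel v.1 (u.2 + u.1 - v.2) - heatKernel v.1 (u.2 - v.2)‖ₑ *
        ENNReal.ofReal (‖u.1‖ ^ a) ∂(gagliardoMeasure θ).prod volume
      = ∫⁻ h, (∫⁻ x, ‖heatKernel v.1 (x + h - v.2) - heatKernel v.1 (x - v.2)‖ₑ) *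
          ENNReal.ofReal (‖h‖ ^ a) ∂gagliardoMeasure θ := by
        rw [lintegral_prod _ (by fun_prop)]
        simp only [lintegral_mul_const' _ _ ENNReal.ofReal_ne_top]
    _ = ∫⁻ h, (∫⁻ x, ‖heatKernel v.1 (x + h - v.2) - heatKernel v.1 (x - v.2)‖ₑ)
          ∂gagliardoMeasure (θ - a) := by
        refine lintegral_norm_rpow_mul_gagliardoMeasure θ a ?_
        fun_prop
    _ ≤ ∫⁻ h, C₁ * ENNReal.ofReal (min 1 (‖h‖ / √v.1)) ^ (1 : ℝ) ∂gagliardoMeasure (θ - a) := by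
        simpa only [ENNReal.rpow_one] using lintegral_mono h_slice
    _ ≤ C₁ * (C₂ * ENNReal.ofReal (√v.1 ^ (-(θ - a)))) := by
        rw [lintegral_const_mul _ (by fun_prop)]
        gcongr
        exact hC₂ _ (sqrt_pos.2 hv)
    _ = (C₁ * C₂ : ℝ≥0) * ENNReal.ofReal (v.1 ^ ((a - θ) / 2)) := by
        rw [ENNReal.coe_mul, mul_assoc, sqrt_eq_rpow, ← rpow_mul hv.le]
        ring_nf

lemma exists_gagliardoEnergy_adjointHeatPotential_le [Nontrivial E] (hp : 1 < p) (hp2 : p < 2)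
    {s : ℝ} (hs : s * p = 2 * (p - 1)) :
    ∃ C : ℝ≥0, ∀ (T B : ℝ) (F : ℝ × E → ℝ), Measurable F → (∀ v, |F v| ≤ B) →
      gagliardoEnergy s p (adjointHeatPotential T F) ≤
        C * ∫⁻ v, ‖F v‖ₑ ^ p ∂stripMeasure T := by
  have hp1 : 0 < p - 1 := by linarith
  obtain ⟨b, hb, hb1, hbp⟩ : ∃ b : ℝ, 1 / 2 < b ∧ b < 1 ∧ 2 * b * (p - 1) < 1 :=
    ⟨1 / 2 + (2 - p) / 4, by linarith, by linarith, by nlinarith⟩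
  obtain ⟨C, hC⟩ := lintegral_enorm_heatKernel_add_sub_mul_rpow_le (E := E) hb hb1
  obtain ⟨D, hD⟩ := exists_lintegral_enorm_heatKernel_add_sub_gagliardoMeasure_le (E := E)
    (θ := s * p) (a := (2 - 2 * b) * (p - 1)) (by nlinarith) (by nlinarith)
  refine ⟨C ^ (p - 1) * D, fun T B F hF hFB => ?_⟩
  have h_schur := lintegral_rpow_lintegral_le_of_schur
    (μ := (gagliardoMeasure (s * p)).prod volume) (ν := stripMeasure T) hp
    (K := fun (u : E × E) v =>
      ‖heatKernel v.1 (u.2 + u.1 - v.2) - heatKernel v.1 (u.2 - v.2)‖ₑ)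
    (F := fun v => ‖F v‖ₑ) (W := fun v => ENNReal.ofReal (v.1 ^ (-b)))
    (g := fun u => ENNReal.ofReal (‖u.1‖ ^ (2 - 2 * b))) (C := C) (D := D)
    (by unfold Function.uncurry; fun_prop) (by fun_prop) (by fun_prop) (by fun_prop)
    ((ae_stripMeasure T).mono fun v hv => by simpa using rpow_pos_of_pos hv.1 _) (by simp)
    (Eventually.of_forall fun u => hC T u.2 u.1)
    ((ae_stripMeasure T).mono fun v hv => ?_)
  · rw [ENNReal.coe_mul, ENNReal.coe_rpow_of_nonneg _ hp1.le]
    refine (lintegral_mono fun u => ?_).trans h_schur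
    gcongr
    exact enorm_adjointHeatPotential_add_sub_le hF hFB u.2 u.1
  · have hv1 := hv.1
    simp only [ENNReal.ofReal_rpow_of_nonneg (rpow_nonneg (norm_nonneg _) _) hp1.le,
      ENNReal.ofReal_rpow_of_nonneg (rpow_nonneg hv1.le _) hp1.le, ← rpow_mul (norm_nonneg _),
      ← rpow_mul hv1.le]
    convert hD v hv1 using 4
    rw [hs]
    ring

end StripMeasure

section UpperBound

variable {E : Type*} [NormedAddCommGroup E] [InnerProductSpace ℝ E] [FiniteDimensional ℝ E]
  [MeasurableSpace E] [BorelSpace E] {p q s B T : ℝ} {F : ℝ × E → ℝ}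

lemma exists_besovNorm_adjointHeatPotential_le [Nontrivial E] (hp : 1 < p) (hp2 : p < 2)
    (hs : s * p = 2 * (p - 1)) (T : ℝ) :
    ∃ C : ℝ≥0, ∀ (B : ℝ) (F : ℝ × E → ℝ), Measurable F → (∀ v, |F v| ≤ B) →
      besovNorm s p (adjointHeatPotential T F) ≤
        C * (∫⁻ v, ‖F v‖ₑ ^ p ∂stripMeasure T) ^ p⁻¹ := by
  have hp0 : 0 ≤ p⁻¹ := by positivity
  obtain ⟨C, hC⟩ := exists_gagliardoEnergy_adjointHeatPotential_le (E := E) hp hp2 hs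
  refine ⟨(T.toNNReal ^ (p - 1)) ^ p⁻¹ + C ^ p⁻¹, fun B F hF hFB => ?_⟩
  rw [ENNReal.coe_add, add_mul, ENNReal.coe_rpow_of_nonneg _ hp0, ENNReal.coe_rpow_of_nonneg _ hp0,
    ENNReal.coe_rpow_of_nonneg _ (by linarith), ← ENNReal.mul_rpow_of_nonneg _ _ hp0,
    ← ENNReal.mul_rpow_of_nonneg _ _ hp0]
  unfold besovNorm
  gcongr
  · exact lintegral_enorm_adjointHeatPotential_rpow_le T hp hF
  · exact hC T B F hF hFB

lemma enorm_integral_eq_lintegral_enorm_of_nonneg_ae {α : Type*} [MeasurableSpace α]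
    {μ : Measure α} {f : α → ℝ} (hf : Integrable f μ) (hf0 : 0 ≤ᵐ[μ] f) :
    ‖∫ x, f x ∂μ‖ₑ = ∫⁻ x, ‖f x‖ₑ ∂μ := by
  rw [Real.enorm_of_nonneg (integral_nonneg_of_ae hf0), ofReal_integral_eq_lintegral_ofReal hf hf0]
  exact lintegral_congr_ae (hf0.mono fun x hx => (Real.enorm_of_nonneg hx).symm)

lemma lintegral_heatPotential_mul_enorm (μ : Measure E) [IsFiniteMeasure μ] (hF : Measurable F)
    (hF0 : ∀ v, 0 ≤ F v) (hFB : ∀ v, |F v| ≤ B) :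
    ∫⁻ v, heatPotential μ v * ‖F v‖ₑ ∂stripMeasure T = ‖∫ x, adjointHeatPotential T F x ∂μ‖ₑ := by
  have h_pos : ∀ x, 0 ≤ᵐ[stripMeasure T] fun v : ℝ × E => heatKernel v.1 (x - v.2) * F v :=
    fun x => (ae_stripMeasure T).mono fun v hv => mul_nonneg (heatKernel_pos hv.1 _).le (hF0 v)
  have h_int : Integrable (adjointHeatPotential T F) μ :=
    Integrable.of_bound (continuous_adjointHeatPotential T hF hFB).aestronglyMeasurable _
      (Eventually.of_forall (abs_adjointHeatPotential_le hFB))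
  calc ∫⁻ v, heatPotential μ v * ‖F v‖ₑ ∂stripMeasure T
      = ∫⁻ v, ∫⁻ y, ‖heatKernel v.1 (y - v.2)‖ₑ * ‖F v‖ₑ ∂μ ∂stripMeasure T := by
        refine lintegral_congr fun v => ?_
        rw [heatPotential, ← lintegral_mul_const _ (by fun_prop)]
        simp only [← heatKernel_neg v.1 (v.2 - _), neg_sub]
    _ = ∫⁻ y, ∫⁻ v, ‖heatKernel v.1 (y - v.2)‖ₑ * ‖F v‖ₑ ∂stripMeasure T ∂μ := by
        refine lintegral_lintegral_swap (Measurable.aemeasurable ?_)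
        unfold Function.uncurry
        fun_prop
    _ = ∫⁻ y, ‖adjointHeatPotential T F y‖ₑ ∂μ := by
        refine lintegral_congr fun y => ?_
        simp_rw [← enorm_mul]
        exact (enorm_integral_eq_lintegral_enorm_of_nonneg_ae
          (integrable_heatKernel_mul hF hFB y) (h_pos y)).symm
    _ = ‖∫ x, adjointHeatPotential T F x ∂μ‖ₑ :=
        (enorm_integral_eq_lintegral_enorm_of_nonneg_ae h_int
          (Eventually.of_forall fun x => integral_nonneg_of_ae (h_pos x))).symm

theorem exists_lintegral_heatPotential_rpow_le [Nontrivial E] (hpq : p.HolderConjugate q)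
    (hq : 2 < q) (T : ℝ) :
    ∃ C : ℝ≥0, ∀ (μ : Measure E) [IsFiniteMeasure μ],
      ∫⁻ v, heatPotential μ v ^ q ∂stripMeasure T ≤ (C * dualBesovNorm (2 / q) p μ) ^ q := by
  have hp2 : p < 2 := by
    rw [hpq.symm.conjugate_eq, div_lt_iff₀ (by linarith)]
    linarith
  have hs : 2 / q * p = 2 * (p - 1) := by
    rw [← hpq.div_conj_eq_sub_one]
    ring
  obtain ⟨C₁, hC₁⟩ := exists_besovNorm_adjointHeatPotential_le (E := E) hpq.lt hp2 hs T
  obtain ⟨C₂, hC₂⟩ := enorm_integral_le_dualBesovNorm_mul_of_continuous (E := E) (s := 2 / q)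
    (by positivity) ((div_lt_one (by linarith)).2 hq) hpq.lt
  refine ⟨C₂ * C₁, fun μ _ => lintegral_rpow_le_of_forall_simpleFunc hpq fun F _ => ?_⟩
  have hF : Measurable fun v => (F v : ℝ) := F.measurable.coe_nnreal_real
  obtain ⟨B, hB⟩ := F.finite_range.bddAbove
  have hFB : ∀ v, |(F v : ℝ)| ≤ B := fun v => by simpa using hB (mem_range_self v)
  calc ∫⁻ v, heatPotential μ v * F v ∂stripMeasure T
      = ‖∫ x, adjointHeatPotential T (fun v => (F v : ℝ)) x ∂μ‖ₑ := by
        simpa using lintegral_heatPotential_mul_enorm μ (T := T) hF (fun v => (F v).2) hFB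
    _ ≤ C₂ * dualBesovNorm (2 / q) p μ *
          besovNorm (2 / q) p (adjointHeatPotential T fun v => (F v : ℝ)) :=
        hC₂ μ _ _ (continuous_adjointHeatPotential T hF hFB) (abs_adjointHeatPotential_le hFB)
    _ ≤ C₂ * dualBesovNorm (2 / q) p μ *
          (C₁ * (∫⁻ v, (F v : ℝ≥0∞) ^ p ∂stripMeasure T) ^ p⁻¹) := by
        gcongr
        simpa using hC₁ B _ hF hFB
    _ = _ := by
        rw [ENNReal.coe_mul]
        ring

end UpperBound

section LowerBound

variable {E : Type*} [NormedAddCommGroup E] [InnerProductSpace ℝ E] [FiniteDimensional ℝ E]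
  [MeasurableSpace E] [BorelSpace E] {p q s t τ B T : ℝ} {η : E → ℝ}

lemma convolutionExists_of_integrable_of_bounded {φ f : E → ℝ} (L : ℝ →L[ℝ] ℝ →L[ℝ] ℝ)
    (hφ : Integrable φ) (hf : Continuous f) (hfB : ∀ x, ‖f x‖ ≤ B) : ConvolutionExists φ f L :=
  fun x => BddAbove.convolutionExistsAt L (s := univ) ⟨B, by rintro _ ⟨y, -, rfl⟩; exact hfB y⟩
    MeasurableSet.univ (subset_univ _) hφ.integrableOn hf.aestronglyMeasurable

lemma convolution_assoc_of_integrable_of_bounded {φ ψ f : E → ℝ} (hφ : Integrable φ)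
    (hψ : Integrable ψ) (hf : Continuous f) (hfB : ∀ x, ‖f x‖ ≤ B) :
    (φ ⋆ ψ) ⋆ f = φ ⋆ (ψ ⋆ f) := by
  have h_cont : Continuous ((fun x => ‖ψ x‖) ⋆[ContinuousLinearMap.mul ℝ ℝ] fun x => ‖f x‖) :=
    BddAbove.continuous_convolution_right_of_integrable _
      ⟨B, by rintro _ ⟨y, rfl⟩; simpa using hfB y⟩ hψ.norm hf.norm
  have h_bound (x : E) :
      ‖((fun x => ‖ψ x‖) ⋆[ContinuousLinearMap.mul ℝ ℝ] fun x => ‖f x‖) x‖ ≤ (∫ y, ‖ψ y‖) * B := by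
    rw [convolution_def, ← integral_mul_const]
    refine norm_integral_le_of_norm_le (hψ.norm.mul_const B) (Eventually.of_forall fun y => ?_)
    simpa using mul_le_mul_of_nonneg_left (hfB _) (abs_nonneg (ψ y))
  ext x
  exact convolution_assoc _ _ _ _ (fun a b c => mul_assoc a b c) hφ.1 hψ.1 hf.aestronglyMeasurable
    (hφ.ae_convolution_exists _ hψ)
    (Eventually.of_forall <| convolutionExists_of_integrable_of_bounded _ hψ.norm hf.norm
      (by simpa using hfB))
    (convolutionExists_of_integrable_of_bounded _ hφ.norm h_cont h_bound x)

lemma heatKernel_convolution_eq_integral (ht : 0 < t) (η : E → ℝ) (x : E) :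
    (heatKernel t ⋆ η) x = ∫ z, heatKernel 1 z * η (x - √t • z) := by
  have h_pow : √t ^ finrank ℝ E ≠ 0 := (pow_pos (sqrt_pos.2 ht) _).ne'
  have h_scale := Measure.integral_comp_smul_of_nonneg volume
    (fun z : E => heatKernel t z * η (x - z)) (√t) (hR := sqrt_nonneg t)
  simp only [heatKernel_sqrt_smul ht, mul_assoc, integral_const_mul, smul_eq_mul] at h_scale
  exact (mul_left_cancel₀ (inv_ne_zero h_pow) h_scale).symm

lemma enorm_integral_heatKernel_convolution_le (τ : ℝ) (μ : Measure E) [SFinite μ] {f : E → ℝ}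
    (hf : Measurable f) :
    ‖∫ x, (heatKernel τ ⋆ f) x ∂μ‖ₑ ≤ ∫⁻ w, heatPotential μ (τ, w) * ‖f w‖ₑ := by
  calc ‖∫ x, (heatKernel τ ⋆ f) x ∂μ‖ₑ
      ≤ ∫⁻ x, ‖∫ w, heatKernel τ (x - w) * f w‖ₑ ∂μ := by
        simp_rw [convolution_lsmul_swap, smul_eq_mul]
        exact enorm_integral_le_lintegral_enorm _
    _ ≤ ∫⁻ x, ∫⁻ w, ‖heatKernel τ (w - x)‖ₑ * ‖f w‖ₑ ∂volume ∂μ := by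
        gcongr with x
        simp only [← heatKernel_neg τ (_ - x), neg_sub, ← enorm_mul]
        exact enorm_integral_le_lintegral_enorm _
    _ = ∫⁻ w, ∫⁻ x, ‖heatKernel τ (w - x)‖ₑ * ‖f w‖ₑ ∂μ := by
        refine lintegral_lintegral_swap (Measurable.aemeasurable ?_)
        unfold Function.uncurry
        fun_prop
    _ = ∫⁻ w, heatPotential μ (τ, w) * ‖f w‖ₑ :=
        lintegral_congr fun w => lintegral_mul_const _ (by fun_prop)

/-- The average of `|η (x + h) - η x|` over `h` with Gaussian weight of variance `∼ t`, at the
space-time point `(t, x)`. Its `L^p` norm with weight `t⁻¹` is controlled by the Gagliardo seminorm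
of order `2(p - 1)/p`. -/
def heatOscillation (η : E → ℝ) (v : ℝ × E) : ℝ≥0∞ :=
  ∫⁻ h, ‖heatKernel v.1 h‖ₑ * ‖η (v.2 + h) - η v.2‖ₑ

@[fun_prop]
lemma measurable_heatOscillation {η : E → ℝ} (hη : Measurable η) :
    Measurable (heatOscillation η) := by
  unfold heatOscillation
  fun_prop

lemma heatOscillation_le_mul (hs : 0 < s) (hst : s ≤ t) (η : E → ℝ) (x : E) :
    heatOscillation η (s, x) ≤
      ENNReal.ofReal ((t / s) ^ ((finrank ℝ E : ℝ) / 2)) * heatOscillation η (t, x) := by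
  unfold heatOscillation
  rw [← lintegral_const_mul' _ _ ENNReal.ofReal_ne_top]
  refine lintegral_mono fun h => ?_
  beta_reduce
  rw [← mul_assoc]
  gcongr
  rw [Real.enorm_of_nonneg (heatKernel_pos hs h).le,
    Real.enorm_of_nonneg (heatKernel_pos (hs.trans_le hst) h).le,
    ← ENNReal.ofReal_mul (by have := hs.trans_le hst; positivity)]
  exact ENNReal.ofReal_le_ofReal (heatKernel_le_rpow_mul hs hst h)

lemma heatOscillation_rpow_le (hp : 1 < p) (ht : 0 < t) {η : E → ℝ} (hη : Measurable η) (x : E) :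
    heatOscillation η (t, x) ^ p ≤ ∫⁻ h, ‖heatKernel t h‖ₑ * ‖η (x + h) - η x‖ₑ ^ p := by
  have h := lintegral_mul_rpow_le_mul_lintegral (μ := volume) hp
    (K := fun h : E => ‖heatKernel t h‖ₑ) (F := fun h => ‖η (x + h) - η x‖ₑ)
    (by fun_prop) (by fun_prop)
  rwa [lintegral_enorm_heatKernel ht, ENNReal.one_rpow, one_mul] at h

lemma exists_lintegral_heatOscillation_rpow_le [Nontrivial E] {a : ℝ} (hp : 1 < p)
    (hs : s * p = 2 * (p - 1)) (ha : 0 < a) :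
    ∃ C : ℝ≥0, ∀ (T : ℝ) (η : E → ℝ), Measurable η →
      ∫⁻ v, (ENNReal.ofReal v.1⁻¹ * heatOscillation η (a * v.1, v.2)) ^ p ∂stripMeasure T ≤
        C * gagliardoEnergy s p η := by
  obtain ⟨C, hC⟩ := exists_lintegral_rpow_mul_heatKernel_le (E := E) hp ha
  refine ⟨C, fun T η hη => ?_⟩
  have hp0 : 0 < p := by linarith
  set D : E → ℝ≥0∞ := fun h => ∫⁻ x, ‖η (x + h) - η x‖ₑ ^ p with hD
  have hD_meas : Measurable D := by fun_prop
  calc ∫⁻ v, (ENNReal.ofReal v.1⁻¹ * heatOscillation η (a * v.1, v.2)) ^ p ∂stripMeasure T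
      = ∫⁻ τ in Ioc 0 T, ∫⁻ x, (ENNReal.ofReal τ⁻¹ * heatOscillation η (a * τ, x)) ^ p :=
        lintegral_stripMeasure T (by fun_prop)
    _ ≤ ∫⁻ τ in Ioc 0 T, ∫⁻ x, ENNReal.ofReal (τ ^ (-p)) *
          ∫⁻ h, ‖heatKernel (a * τ) h‖ₑ * ‖η (x + h) - η x‖ₑ ^ p := by
        refine setLIntegral_mono' measurableSet_Ioc fun τ hτ => lintegral_mono fun x => ?_
        have hτ0 : 0 < τ := hτ.1
        beta_reduce
        rw [ENNReal.mul_rpow_of_nonneg _ _ hp0.le, rpow_neg hτ0.le, ← inv_rpow hτ0.le,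
          ENNReal.ofReal_rpow_of_nonneg (by positivity) hp0.le]
        gcongr
        exact heatOscillation_rpow_le hp (by positivity) hη x
    _ ≤ ∫⁻ τ in Ioi 0, ∫⁻ h, ENNReal.ofReal (τ ^ (-p)) * ‖heatKernel (a * τ) h‖ₑ * D h := by
        refine (lintegral_mono_set Ioc_subset_Ioi_self).trans (lintegral_mono fun τ => le_of_eq ?_)
        beta_reduce
        rw [lintegral_const_mul _ (by fun_prop),
          lintegral_lintegral_swap (by unfold Function.uncurry; fun_prop)]
        simp_rw [mul_assoc]
        rw [lintegral_const_mul _ (by fun_prop)]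
        congr! 3 with h
        exact lintegral_const_mul _ (by fun_prop)
    _ = ∫⁻ h, (∫⁻ τ in Ioi 0, ENNReal.ofReal (τ ^ (-p)) * ‖heatKernel (a * τ) h‖ₑ) * D h := by
        rw [lintegral_lintegral_swap (by unfold Function.uncurry; fun_prop)]
        exact lintegral_congr fun h => lintegral_mul_const _ (by fun_prop)
    _ ≤ ∫⁻ h, C * ENNReal.ofReal (‖h‖ ^ (-(finrank ℝ E + 2 * (p - 1)))) * D h := by
        have h_ne : ∀ᵐ h : E, h ≠ 0 := compl_mem_ae_iff.2 (measure_singleton 0)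
        refine lintegral_mono_ae (h_ne.mono fun h hh => ?_)
        gcongr
        exact hC h hh
    _ = C * gagliardoEnergy s p η := by
        rw [gagliardoEnergy_eq_lintegral_lintegral s p hη, hs,
          lintegral_gagliardoMeasure _ (by fun_prop), ← lintegral_const_mul' _ _ ENNReal.coe_ne_top]
        simp_rw [mul_assoc, hD]

lemma lintegral_ofReal_div_mul_lintegral_mul_le (hpq : p.HolderConjugate q) (T : ℝ) {b : ℝ}
    (hb : 0 ≤ b) {U G : ℝ × E → ℝ≥0∞} (hU : Measurable U) (hG : Measurable G) :
    ∫⁻ τ in Ioc 0 T, ENNReal.ofReal (b / τ) * ∫⁻ w, U (τ, w) * G (τ, w) ≤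
      ENNReal.ofReal b * ((∫⁻ v, U v ^ q ∂stripMeasure T) ^ q⁻¹ *
        (∫⁻ v, (ENNReal.ofReal v.1⁻¹ * G v) ^ p ∂stripMeasure T) ^ p⁻¹) := by
  calc ∫⁻ τ in Ioc 0 T, ENNReal.ofReal (b / τ) * ∫⁻ w, U (τ, w) * G (τ, w)
      = ENNReal.ofReal b * ∫⁻ v, U v * (ENNReal.ofReal v.1⁻¹ * G v) ∂stripMeasure T := by
        rw [lintegral_stripMeasure T (by fun_prop), ← lintegral_const_mul _ (by fun_prop)]
        refine lintegral_congr fun τ => ?_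
        simp only [mul_left_comm (U _)]
        rw [lintegral_const_mul _ (by fun_prop), ← mul_assoc, ← ENNReal.ofReal_mul hb,
          div_eq_mul_inv]
    _ ≤ _ := by
        gcongr
        simpa only [one_div, Pi.mul_apply] using ENNReal.lintegral_mul_le_Lp_mul_Lq
          (stripMeasure T) hpq.symm (f := U) (g := fun v => ENNReal.ofReal v.1⁻¹ * G v)
          hU.aemeasurable (by fun_prop)

lemma convolutionExists_heatKernel (hη : Continuous η) (hηB : ∀ x, |η x| ≤ B) (ht : 0 < t) :
    ConvolutionExists (heatKernel t) η (ContinuousLinearMap.lsmul ℝ ℝ) :=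
  convolutionExists_of_integrable_of_bounded _ (integrable_heatKernel ht) hη hηB

lemma continuous_heatKernel_convolution (hη : Continuous η) (hηB : ∀ x, |η x| ≤ B)
    (ht : 0 < t) : Continuous (heatKernel t ⋆ η) :=
  BddAbove.continuous_convolution_right_of_integrable _
    ⟨B, by rintro _ ⟨y, rfl⟩; exact hηB y⟩ (integrable_heatKernel ht) hη

lemma integrable_heatKernel_convolution (hη : Continuous η) (hηB : ∀ x, |η x| ≤ B)
    (ht : 0 < t) (μ : Measure E) [IsFiniteMeasure μ] :
    Integrable (heatKernel t ⋆ η) μ :=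
  Integrable.of_bound (continuous_heatKernel_convolution hη hηB ht).aestronglyMeasurable B
    (Eventually.of_forall (abs_convolution_le (lintegral_enorm_heatKernel ht).le hηB))

lemma heatKernel_convolution_heatKernel_convolution (hη : Continuous η)
    (hηB : ∀ x, |η x| ≤ B) (hs : 0 < s) (ht : 0 < t) :
    heatKernel s ⋆ (heatKernel t ⋆ η) = heatKernel (s + t) ⋆ η := by
  rw [← heatKernel_convolution_heatKernel hs ht, convolution_assoc_of_integrable_of_bounded
    (integrable_heatKernel hs) (integrable_heatKernel ht) hη hηB]

lemma tendsto_heatKernel_convolution (hη : Continuous η) (hηB : ∀ x, |η x| ≤ B) (x : E) :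
    Tendsto (fun t => (heatKernel t ⋆ η) x) (𝓝[>] 0) (𝓝 (η x)) := by
  have h_int : Tendsto (fun t : ℝ => ∫ z, heatKernel 1 z * η (x - √t • z)) (𝓝 0)
      (𝓝 (∫ z, heatKernel 1 z * η (x - √0 • z))) := by
    refine tendsto_integral_filter_of_dominated_convergence (fun z => heatKernel 1 z * B)
      (Eventually.of_forall fun t => Continuous.aestronglyMeasurable (by fun_prop))
      (Eventually.of_forall fun t => Eventually.of_forall fun z => ?_)
      ((integrable_heatKernel one_pos).mul_const B)
      (Eventually.of_forall fun z => Continuous.tendsto (by fun_prop) 0)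
    rw [norm_mul, norm_of_nonneg (heatKernel_pos one_pos z).le]
    exact mul_le_mul_of_nonneg_left (hηB _) (heatKernel_pos one_pos z).le
  simp only [sqrt_zero, zero_smul, sub_zero, integral_mul_const, integral_heatKernel one_pos,
    one_mul] at h_int
  refine (h_int.mono_left nhdsWithin_le_nhds).congr' ?_
  filter_upwards [self_mem_nhdsWithin] with t ht
  exact (heatKernel_convolution_eq_integral ht η x).symm

lemma tendsto_integral_heatKernel_convolution (hη : Continuous η) (hηB : ∀ x, |η x| ≤ B)
    (μ : Measure E) [IsFiniteMeasure μ] :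
    Tendsto (fun t => ∫ x, (heatKernel t ⋆ η) x ∂μ) (𝓝[>] 0) (𝓝 (∫ x, η x ∂μ)) := by
  refine tendsto_integral_filter_of_dominated_convergence (fun _ => B) ?_ ?_ (integrable_const B)
    (Eventually.of_forall (tendsto_heatKernel_convolution hη hηB))
  · filter_upwards [self_mem_nhdsWithin] with t ht
    exact (continuous_heatKernel_convolution hη hηB ht).aestronglyMeasurable
  · filter_upwards [self_mem_nhdsWithin] with t ht
    exact Eventually.of_forall (abs_convolution_le (lintegral_enorm_heatKernel ht).le hηB)

lemma enorm_heatKernel_convolution_sub_le (hη : Continuous η) (hηB : ∀ x, |η x| ≤ B)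
    (ht : 0 < t) (x : E) :
    ‖(heatKernel t ⋆ η) x - η x‖ₑ ≤ heatOscillation η (t, x) := by
  have h_eq : (heatKernel t ⋆ η) x - η x = ∫ h, heatKernel t h * (η (x + h) - η x) := by
    have h_shift : Integrable fun h => heatKernel t h * η (x - h) :=
      convolutionExists_heatKernel hη hηB ht x
    rw [← integral_neg_eq_self]
    simp only [heatKernel_neg, ← sub_eq_add_neg, mul_sub]
    rw [integral_sub h_shift ((integrable_heatKernel ht).mul_const _), integral_mul_const,
      integral_heatKernel ht, one_mul]
    rfl
  rw [h_eq]
  simpa only [heatOscillation, enorm_mul] using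
    enorm_integral_le_lintegral_enorm fun h => heatKernel t h * (η (x + h) - η x)

lemma enorm_integral_heatKernel_convolution_sub_le (hη : Continuous η)
    (hηB : ∀ x, |η x| ≤ B) {a : ℝ} (hτ : 0 < τ) (ha : 2 * τ ≤ a) (ha' : a ≤ 8 * τ)
    (μ : Measure E) [IsFiniteMeasure μ] :
    ‖∫ x, (heatKernel a ⋆ η) x ∂μ - ∫ x, (heatKernel τ ⋆ η) x ∂μ‖ₑ ≤
      ENNReal.ofReal (7 ^ ((finrank ℝ E : ℝ) / 2)) *
        ∫⁻ w, heatPotential μ (τ, w) * heatOscillation η (7 * τ, w) := by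
  have hs : 0 < a - τ := by linarith
  set ψ := heatKernel (a - τ) ⋆ η
  have hψ_cont : Continuous ψ := continuous_heatKernel_convolution hη hηB hs
  have h_semigroup : heatKernel τ ⋆ (ψ - η) = heatKernel a ⋆ η - heatKernel τ ⋆ η := by
    have h_ex : ConvolutionExists (heatKernel τ) ψ (ContinuousLinearMap.lsmul ℝ ℝ) :=
      convolutionExists_heatKernel hψ_cont
        (abs_convolution_le (lintegral_enorm_heatKernel hs).le hηB) hτ
    ext x
    rw [Pi.sub_apply, ← add_sub_cancel τ a,
      ← heatKernel_convolution_heatKernel_convolution hη hηB hτ hs, convolution_def,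
      convolution_def, convolution_def,
      ← integral_sub (h_ex x) (convolutionExists_heatKernel hη hηB hτ x)]
    simp only [Pi.sub_apply, map_sub]
  rw [← integral_sub (integrable_heatKernel_convolution hη hηB (by linarith) μ)
    (integrable_heatKernel_convolution hη hηB hτ μ)]
  calc ‖∫ x, ((heatKernel a ⋆ η) x - (heatKernel τ ⋆ η) x) ∂μ‖ₑ
      = ‖∫ x, (heatKernel τ ⋆ (ψ - η)) x ∂μ‖ₑ := by rw [h_semigroup]; rfl
    _ ≤ ∫⁻ w, heatPotential μ (τ, w) * ‖(ψ - η) w‖ₑ :=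
        enorm_integral_heatKernel_convolution_le τ μ (hψ_cont.sub hη).measurable
    _ ≤ ∫⁻ w, ENNReal.ofReal (7 ^ ((finrank ℝ E : ℝ) / 2)) *
          (heatPotential μ (τ, w) * heatOscillation η (7 * τ, w)) := by
        refine lintegral_mono fun w => ?_
        beta_reduce
        rw [mul_left_comm]
        gcongr
        calc ‖(ψ - η) w‖ₑ ≤ heatOscillation η (a - τ, w) :=
              enorm_heatKernel_convolution_sub_le hη hηB hs w
          _ ≤ ENNReal.ofReal ((7 * τ / (a - τ)) ^ ((finrank ℝ E : ℝ) / 2)) *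
                heatOscillation η (7 * τ, w) := heatOscillation_le_mul hs (by linarith) η w
          _ ≤ _ := by
              gcongr
              rw [div_le_iff₀ hs]
              linarith
    _ = _ := lintegral_const_mul' _ _ ENNReal.ofReal_ne_top

lemma enorm_integral_heatKernel_convolution_four_mul_le (hη : Continuous η)
    (hηB : ∀ x, |η x| ≤ B) (hpq : p.HolderConjugate q) (hT : 0 < T) (μ : Measure E)
    [IsFiniteMeasure μ] :
    ‖∫ x, (heatKernel (4 * T) ⋆ η) x ∂μ‖ₑ ≤ ENNReal.ofReal T⁻¹ ^ q⁻¹ *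
      (∫⁻ v, heatPotential μ v ^ q ∂stripMeasure T) ^ q⁻¹ * (∫⁻ x, ‖η x‖ₑ ^ p) ^ p⁻¹ := by
  set Φ := ‖∫ x, (heatKernel (4 * T) ⋆ η) x ∂μ‖ₑ
  set A := (∫⁻ x, ‖η x‖ₑ ^ p) ^ p⁻¹
  have hU := measurable_heatPotential μ
  have hq0 := hpq.symm.pos
  have h_slice : ∀ τ ∈ Ioc 0 T, Φ ^ q ≤ A ^ q * ∫⁻ w, heatPotential μ (τ, w) ^ q := by
    intro τ hτ
    have hs : 0 < 4 * T - τ := by linarith [hτ.2]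
    have h_cont := continuous_heatKernel_convolution hη hηB hs
    rw [← ENNReal.le_rpow_inv_iff hq0, ENNReal.mul_rpow_of_nonneg _ _ (by positivity),
      ENNReal.rpow_rpow_inv hq0.ne']
    calc Φ = ‖∫ x, (heatKernel τ ⋆ (heatKernel (4 * T - τ) ⋆ η)) x ∂μ‖ₑ := by
          rw [heatKernel_convolution_heatKernel_convolution hη hηB hτ.1 hs, add_sub_cancel]
      _ ≤ ∫⁻ w, heatPotential μ (τ, w) * ‖(heatKernel (4 * T - τ) ⋆ η) w‖ₑ :=
          enorm_integral_heatKernel_convolution_le τ μ h_cont.measurable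
      _ ≤ (∫⁻ w, heatPotential μ (τ, w) ^ q) ^ q⁻¹ *
            (∫⁻ w, ‖(heatKernel (4 * T - τ) ⋆ η) w‖ₑ ^ p) ^ p⁻¹ := by
          simpa only [one_div, Pi.mul_apply] using
            ENNReal.lintegral_mul_le_Lp_mul_Lq volume hpq.symm
            (by fun_prop) h_cont.measurable.enorm.aemeasurable
      _ ≤ (∫⁻ w, heatPotential μ (τ, w) ^ q) ^ q⁻¹ * A := by
          have hp0 := hpq.pos
          unfold A
          gcongr _ * ?_ ^ _
          exact lintegral_enorm_convolution_rpow_le hpq.lt (by fun_prop)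
            (lintegral_enorm_heatKernel hs).le hη.measurable
      _ = _ := mul_comm _ _
  have h_avg : ENNReal.ofReal T * Φ ^ q ≤ A ^ q * ∫⁻ v, heatPotential μ v ^ q ∂stripMeasure T := by
    have h_vol : volume (Ioc 0 T) = ENNReal.ofReal T := by rw [Real.volume_Ioc, sub_zero]
    rw [lintegral_stripMeasure T (by fun_prop), ← lintegral_const_mul _ (by fun_prop), mul_comm,
      ← h_vol, ← setLIntegral_const]
    exact setLIntegral_mono' measurableSet_Ioc h_slice
  have hT0 : ENNReal.ofReal T ≠ 0 := (ENNReal.ofReal_pos.2 hT).ne'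
  rw [ENNReal.ofReal_inv_of_pos hT, ← ENNReal.mul_rpow_of_nonneg _ _ (inv_nonneg.2 hq0.le),
    mul_comm, ← ENNReal.rpow_rpow_inv hq0.ne' A, ← ENNReal.mul_rpow_of_nonneg _ _
    (inv_nonneg.2 hq0.le), ENNReal.le_rpow_inv_iff hq0, mul_left_comm]
  exact (ENNReal.mul_le_iff_le_inv hT0 ENNReal.ofReal_ne_top).1 h_avg

lemma exists_lintegral_heatPotential_mul_heatOscillation_le [Nontrivial E] {a b : ℝ}
    (hpq : p.HolderConjugate q) (hs : s * p = 2 * (p - 1)) (ha : 0 < a) (hb : 0 ≤ b) :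
    ∃ C : ℝ≥0, ∀ (T : ℝ) (μ : Measure E) [SFinite μ] (η : E → ℝ), Measurable η →
      ∫⁻ τ in Ioc 0 T, ENNReal.ofReal (b / τ) *
          ∫⁻ w, heatPotential μ (τ, w) * heatOscillation η (a * τ, w) ≤
        C * (∫⁻ v, heatPotential μ v ^ q ∂stripMeasure T) ^ q⁻¹ * besovNorm s p η := by
  obtain ⟨C, hC⟩ := exists_lintegral_heatOscillation_rpow_le (E := E) hpq.lt hs ha
  have hp0 := hpq.inv_nonneg
  refine ⟨b.toNNReal * C ^ p⁻¹, fun T μ _ η hη => ?_⟩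
  have hU := measurable_heatPotential μ
  set U := (∫⁻ v, heatPotential μ v ^ q ∂stripMeasure T) ^ q⁻¹
  calc _ ≤ ENNReal.ofReal b * (U * (∫⁻ v, (ENNReal.ofReal v.1⁻¹ *
        heatOscillation η (a * v.1, v.2)) ^ p ∂stripMeasure T) ^ p⁻¹) :=
        lintegral_ofReal_div_mul_lintegral_mul_le hpq T hb hU
          (G := fun v => heatOscillation η (a * v.1, v.2)) (by fun_prop)
    _ ≤ ENNReal.ofReal b * (U * (C * gagliardoEnergy s p η) ^ p⁻¹) := by
        gcongr
        exact hC T η hη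
    _ ≤ ENNReal.ofReal b * (U * (C ^ p⁻¹ * besovNorm s p η)) := by
        rw [ENNReal.mul_rpow_of_nonneg _ _ hp0]
        gcongr
        exact le_add_self
    _ = _ := by
        rw [ENNReal.coe_mul, ENNReal.coe_rpow_of_nonneg _ hp0, ENNReal.ofReal]
        ring

lemma exists_enorm_integral_le_mul_besovNorm [Nontrivial E] (hpq : p.HolderConjugate q)
    (hs : s * p = 2 * (p - 1)) (hT : 0 < T) :
    ∃ C : ℝ≥0, ∀ (μ : Measure E) [IsFiniteMeasure μ] (η : E → ℝ) (B : ℝ), Continuous η →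
      (∀ x, |η x| ≤ B) → ‖∫ x, η x ∂μ‖ₑ ≤
        C * (∫⁻ v, heatPotential μ v ^ q ∂stripMeasure T) ^ q⁻¹ * besovNorm s p η := by
  obtain ⟨C, hC⟩ := exists_lintegral_heatPotential_mul_heatOscillation_le (E := E) hpq hs
    (show (0 : ℝ) < 7 by norm_num) zero_le_four
  set c : ℝ≥0 := (7 ^ ((finrank ℝ E : ℝ) / 2) : ℝ).toNNReal
  set c₁ : ℝ≥0 := T⁻¹.toNNReal ^ q⁻¹
  refine ⟨c₁ + c * C, fun μ _ η B hη hηB => ?_⟩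
  set U := (∫⁻ v, heatPotential μ v ^ q ∂stripMeasure T) ^ q⁻¹
  have h_low : ‖∫ x, (heatKernel (4 * T) ⋆ η) x ∂μ‖ₑ ≤ c₁ * U * besovNorm s p η := by
    refine (enorm_integral_heatKernel_convolution_four_mul_le hη hηB hpq hT μ).trans ?_
    rw [ENNReal.coe_rpow_of_nonneg _ hpq.symm.inv_nonneg]
    exact mul_le_mul_right le_self_add _
  have h_high : ∫⁻ τ in Ioc 0 T, ENNReal.ofReal (4 / τ) *
      (c * ∫⁻ w, heatPotential μ (τ, w) * heatOscillation η (7 * τ, w)) ≤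
        c * (C * U * besovNorm s p η) := by
    simp only [mul_left_comm _ (c : ℝ≥0∞), lintegral_const_mul' _ _ ENNReal.coe_ne_top]
    gcongr
    exact hC T μ η hη.measurable
  calc ‖∫ x, η x ∂μ‖ₑ
      ≤ ‖∫ x, (heatKernel (4 * T) ⋆ η) x ∂μ‖ₑ + ∫⁻ τ in Ioc 0 T, ENNReal.ofReal (4 / τ) *
          (c * ∫⁻ w, heatPotential μ (τ, w) * heatOscillation η (7 * τ, w)) :=
        enorm_le_add_setLIntegral_of_tendsto hT
          (fun τ a hτ ha ha' => enorm_integral_heatKernel_convolution_sub_le hη hηB hτ ha ha' μ)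
          (tendsto_integral_heatKernel_convolution hη hηB μ)
    _ ≤ c₁ * U * besovNorm s p η + c * (C * U * besovNorm s p η) := add_le_add h_low h_high
    _ = _ := by
        rw [ENNReal.coe_add, ENNReal.coe_mul]
        ring

theorem exists_dualBesovNorm_le [Nontrivial E] (hpq : p.HolderConjugate q) (hT : 0 < T) :
    ∃ C : ℝ≥0, ∀ (μ : Measure E) [IsFiniteMeasure μ],
      dualBesovNorm (2 / q) p μ ≤ C * (∫⁻ v, heatPotential μ v ^ q ∂stripMeasure T) ^ q⁻¹ := by
  have hs : 2 / q * p = 2 * (p - 1) := by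
    rw [← hpq.div_conj_eq_sub_one]
    ring
  obtain ⟨C, hC⟩ := exists_enorm_integral_le_mul_besovNorm (E := E) hpq hs hT
  refine ⟨C, fun μ _ => iSup₂_le fun ζ ⟨hζ, hζ_supp, hζ_norm⟩ => ?_⟩
  obtain ⟨B, hB⟩ := hζ.continuous.bounded_above_of_compact_support hζ_supp
  calc _ ≤ _ := hC μ ζ B hζ.continuous hB
    _ ≤ _ := mul_le_of_le_one_right' hζ_norm

end LowerBound

section RealIntegrals

variable {E : Type*} [NormedAddCommGroup E] [InnerProductSpace ℝ E] [FiniteDimensional ℝ E]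
  [MeasurableSpace E] [BorelSpace E] {s p : ℝ} {η : E → ℝ}

lemma integral_abs_rpow_eq_toReal (hp : 0 ≤ p) (hη : Measurable η) :
    ∫ x, |η x| ^ p = (∫⁻ x, ‖η x‖ₑ ^ p).toReal := by
  rw [integral_eq_lintegral_of_nonneg_ae (Eventually.of_forall fun x => by positivity)
    (Measurable.aestronglyMeasurable (by fun_prop))]
  simp only [← ENNReal.ofReal_rpow_of_nonneg (abs_nonneg _) hp, Real.enorm_eq_ofReal_abs]

lemma gagliardoEnergy_eq_lintegral_lintegral_sub (s : ℝ) (hp : 0 ≤ p) (hη : Measurable η) :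
    gagliardoEnergy s p η =
      ∫⁻ x, ∫⁻ y, ENNReal.ofReal (|η x - η y| ^ p / ‖x - y‖ ^ (finrank ℝ E + s * p)) := by
  have h_swap : gagliardoEnergy s p η =
      ∫⁻ x, ∫⁻ h, ENNReal.ofReal (‖h‖ ^ (-(finrank ℝ E + s * p))) * ‖η (x + h) - η x‖ₑ ^ p := by
    rw [gagliardoEnergy_eq_lintegral_lintegral s p hη,
      lintegral_gagliardoMeasure _ (by fun_prop),
      lintegral_lintegral_swap (by unfold Function.uncurry; fun_prop)]
    exact lintegral_congr fun h => (lintegral_const_mul _ (by fun_prop)).symm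
  rw [h_swap]
  refine lintegral_congr fun x => ?_
  rw [← lintegral_add_left_eq_self (fun y => ENNReal.ofReal (|η x - η y| ^ p / _)) x]
  refine lintegral_congr fun h => ?_
  rw [sub_add_cancel_left, norm_neg, abs_sub_comm, Real.enorm_eq_ofReal_abs,
    ENNReal.ofReal_rpow_of_nonneg (abs_nonneg _) hp, ← ENNReal.ofReal_mul (by positivity),
    rpow_neg (norm_nonneg _), mul_comm, div_eq_mul_inv]

lemma integral_integral_eq_toReal_gagliardoEnergy (hp : 0 ≤ p) (hη : Measurable η)
    (h_top : gagliardoEnergy s p η ≠ ∞) :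
    ∫ x, ∫ y, |η x - η y| ^ p / ‖x - y‖ ^ (finrank ℝ E + s * p) =
      (gagliardoEnergy s p η).toReal := by
  rw [gagliardoEnergy_eq_lintegral_lintegral_sub s hp hη] at h_top ⊢
  rw [← integral_toReal (by fun_prop) (ae_lt_top (by fun_prop) h_top)]
  refine integral_congr_ae (Eventually.of_forall fun x => ?_)
  exact integral_eq_lintegral_of_nonneg_ae (Eventually.of_forall fun y => by positivity)
    (Measurable.aestronglyMeasurable (by fun_prop))

lemma besovNorm_eq_ofReal [Nontrivial E] (hs : 0 < s) (hs1 : s < 1) (hp : 1 ≤ p)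
    (hη : ContDiff ℝ 1 η) (hη_supp : HasCompactSupport η) :
    besovNorm s p η = ENNReal.ofReal ((∫ x, |η x| ^ p) ^ p⁻¹ +
      (∫ x, ∫ y, |η x - η y| ^ p / ‖x - y‖ ^ (finrank ℝ E + s * p)) ^ p⁻¹) := by
  have hp0 : 0 < p := by linarith
  have hη_meas := hη.continuous.measurable
  have h_energy := gagliardoEnergy_ne_top hs hs1 hp hη hη_supp
  have h_Lp := lintegral_enorm_rpow_ne_top hp0 hη.continuous hη_supp
  rw [integral_abs_rpow_eq_toReal hp0.le hη_meas,
    integral_integral_eq_toReal_gagliardoEnergy hp0.le hη_meas h_energy,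
    ENNReal.ofReal_add (by positivity) (by positivity),
    ← ENNReal.ofReal_rpow_of_nonneg ENNReal.toReal_nonneg (by positivity),
    ← ENNReal.ofReal_rpow_of_nonneg ENNReal.toReal_nonneg (by positivity),
    ENNReal.ofReal_toReal h_energy, ENNReal.ofReal_toReal h_Lp, besovNorm]

end RealIntegrals

section EuclideanSpace

variable {N : ℕ} {p q T : ℝ} {μ : Measure (Euc N)}

lemma mem_dualSet_iff [Nontrivial (Euc N)] (hpq : p.HolderConjugate q) (hq : 2 < q) {r : ℝ} :
    r ∈ dualSet N q μ ↔ ∃ η : Euc N → ℝ, ContDiff ℝ (⊤ : ℕ∞) η ∧ HasCompactSupport η ∧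
      besovNorm (2 / q) p η ≤ 1 ∧ r = ∫ x, η x ∂μ := by
  have hp : q / (q - 1) = p := hpq.symm.conjugate_eq.symm
  have hp_inv : (q - 1) / q = p⁻¹ := by rw [← hp, inv_div]
  have hs : 2 / (q - 1) = 2 / q * p := by
    rw [← hp, div_mul_div_cancel₀ hpq.symm.ne_zero]
  simp only [dualSet, mem_ofPred_eq, hp, hp_inv, hs]
  refine exists_congr fun η => and_congr_right fun hη => and_congr_right fun hη_supp =>
    and_congr_left fun _ => ?_
  rw [besovNorm_eq_ofReal (by positivity) ((div_lt_one hpq.symm.pos).2 hq) hpq.lt.le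
    (hη.of_le (by norm_cast)) hη_supp, ENNReal.ofReal_le_one, finrank_euclideanSpace_fin]

lemma zero_mem_dualSet [Nontrivial (Euc N)] (hpq : p.HolderConjugate q) (hq : 2 < q) :
    0 ∈ dualSet N q μ := by
  refine (mem_dualSet_iff hpq hq).2
    ⟨fun _ => 0, contDiff_const, HasCompactSupport.zero, ?_, by simp⟩
  have h := besovNorm_const_mul (2 / q) hpq.pos 0 (0 : Euc N → ℝ)
  simp only [enorm_zero, zero_mul] at h
  exact h.trans_le zero_le_one

lemma dualBesovNorm_eq_ofReal_sSup [Nontrivial (Euc N)] (hpq : p.HolderConjugate q) (hq : 2 < q)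
    (hμ : BddAbove (dualSet N q μ)) :
    dualBesovNorm (2 / q) p μ = ENNReal.ofReal (sSup (dualSet N q μ)) := by
  have h_le : dualBesovNorm (2 / q) p μ ≤ ENNReal.ofReal (sSup (dualSet N q μ)) := by
    refine iSup₂_le fun η ⟨hη, hη_supp, hη_norm⟩ => ?_
    rw [Real.enorm_eq_ofReal_abs]
    refine ENNReal.ofReal_le_ofReal (abs_le'.2 ⟨?_, ?_⟩)
    · exact le_csSup hμ ((mem_dualSet_iff hpq hq).2 ⟨η, hη, hη_supp, hη_norm, rfl⟩)
    · refine le_csSup hμ ((mem_dualSet_iff hpq hq).2 ⟨-η, hη.neg, hη_supp.neg, ?_, ?_⟩)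
      · have h := besovNorm_const_mul (2 / q) hpq.pos (-1) η
        simp only [neg_one_mul, enorm_neg, enorm_one, one_mul] at h
        exact h.trans_le hη_norm
      · exact (integral_neg _).symm
  have h_top := ne_top_of_le_ne_top ENNReal.ofReal_ne_top h_le
  refine h_le.antisymm ((ENNReal.ofReal_le_iff_le_toReal h_top).2
    (csSup_le ⟨0, zero_mem_dualSet hpq hq⟩ fun r hr => ?_))
  obtain ⟨η, hη, hη_supp, hη_norm, rfl⟩ := (mem_dualSet_iff hpq hq).1 hr
  refine (ENNReal.ofReal_le_iff_le_toReal h_top).1 ?_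
  refine (ENNReal.ofReal_le_ofReal (le_abs_self _)).trans ?_
  rw [← Real.enorm_eq_ofReal_abs]
  exact le_iSup₂_of_le η ⟨hη, hη_supp, hη_norm⟩ le_rfl

lemma sSup_dualSet_nonneg [Nontrivial (Euc N)] (hpq : p.HolderConjugate q) (hq : 2 < q)
    (hμ : BddAbove (dualSet N q μ)) : 0 ≤ sSup (dualSet N q μ) :=
  le_csSup hμ (zero_mem_dualSet hpq hq)

lemma lintegral_heatPotential_rpow_ne_top [Nontrivial (Euc N)] [IsFiniteMeasure μ]
    (hpq : p.HolderConjugate q) (hq : 2 < q) (T : ℝ) (hμ : BddAbove (dualSet N q μ)) :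
    ∫⁻ v, heatPotential μ v ^ q ∂stripMeasure T ≠ ∞ := by
  obtain ⟨C, hC⟩ := exists_lintegral_heatPotential_rpow_le (E := Euc N) hpq hq T
  refine ne_top_of_le_ne_top ?_ (hC μ)
  rw [dualBesovNorm_eq_ofReal_sSup hpq hq hμ]
  finiteness

lemma heatPotM_eq_toReal (μ : Measure (Euc N)) {t : ℝ} (ht : 0 < t) (x : Euc N) :
    heatPotM N μ x t = (heatPotential μ (t, x)).toReal := by
  have h_meas : Measurable fun y : Euc N => heatKernel t (x - y) := by fun_prop
  have h_kernel : heatPotM N μ x t = ∫ y, heatKernel t (x - y) ∂μ := by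
    simp only [heatPotM, heatKernel, finrank_euclideanSpace_fin]
  rw [h_kernel, integral_eq_lintegral_of_nonneg_ae
    (Eventually.of_forall fun y => (heatKernel_pos ht _).le) h_meas.aestronglyMeasurable]
  simp only [heatPotential, Real.enorm_of_nonneg (heatKernel_pos ht _).le]

lemma integral_heatPotM_rpow_nonneg (μ : Measure (Euc N)) (q T : ℝ) :
    0 ≤ ∫ t in Ioc 0 T, ∫ x, heatPotM N μ x t ^ q := by
  refine setIntegral_nonneg measurableSet_Ioc fun t ht => integral_nonneg fun x => ?_
  rw [heatPotM_eq_toReal μ ht.1, Pi.zero_apply]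
  positivity

lemma integral_heatPotM_rpow_eq_toReal (hq : 0 < q) [IsFiniteMeasure μ]
    (h_top : ∫⁻ v, heatPotential μ v ^ q ∂stripMeasure T ≠ ∞) :
    ∫ t in Ioc 0 T, ∫ x, heatPotM N μ x t ^ q =
      (∫⁻ v, heatPotential μ v ^ q ∂stripMeasure T).toReal := by
  have hU := measurable_heatPotential μ
  rw [lintegral_stripMeasure T (by fun_prop)] at h_top ⊢
  rw [← integral_toReal (by fun_prop) (ae_lt_top (by fun_prop) h_top)]
  refine setIntegral_congr_fun measurableSet_Ioc fun t ht => ?_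
  have h_fin : ∀ x : Euc N, heatPotential μ (t, x) ^ q < ∞ := fun x =>
    ENNReal.rpow_lt_top_of_nonneg hq.le (heatPotential_ne_top μ ht.1 x)
  rw [← integral_toReal (by fun_prop) (Eventually.of_forall h_fin)]
  simp only [heatPotM_eq_toReal μ ht.1, ENNReal.toReal_rpow]

lemma exists_integral_heatPotM_rpow_le [Nontrivial (Euc N)] (hpq : p.HolderConjugate q)
    (hq : 2 < q) (T : ℝ) : ∃ C : ℝ≥0, ∀ (μ : Measure (Euc N)) [IsFiniteMeasure μ],
      BddAbove (dualSet N q μ) → (∫ t in Ioc 0 T, ∫ x, heatPotM N μ x t ^ q) ^ (1 / q) ≤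
        C * sSup (dualSet N q μ) := by
  obtain ⟨C, hC⟩ := exists_lintegral_heatPotential_rpow_le (E := Euc N) hpq hq T
  refine ⟨C, fun μ _ hμ => ?_⟩
  have h_top := lintegral_heatPotential_rpow_ne_top hpq hq T hμ
  have h := (ENNReal.rpow_inv_le_iff hpq.symm.pos).2 (hC μ)
  rw [dualBesovNorm_eq_ofReal_sSup hpq hq hμ] at h
  replace h := ENNReal.toReal_mono (by finiteness) h
  rwa [ENNReal.toReal_mul, ENNReal.coe_toReal,
    ENNReal.toReal_ofReal (sSup_dualSet_nonneg hpq hq hμ), ← ENNReal.toReal_rpow,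
    ← integral_heatPotM_rpow_eq_toReal hpq.symm.pos h_top, ← one_div] at h

lemma exists_sSup_dualSet_le [Nontrivial (Euc N)] (hpq : p.HolderConjugate q) (hq : 2 < q)
    (hT : 0 < T) : ∃ C : ℝ≥0, ∀ (μ : Measure (Euc N)) [IsFiniteMeasure μ],
      BddAbove (dualSet N q μ) →
        sSup (dualSet N q μ) ≤ C * (∫ t in Ioc 0 T, ∫ x, heatPotM N μ x t ^ q) ^ (1 / q) := by
  obtain ⟨C, hC⟩ := exists_dualBesovNorm_le (E := Euc N) hpq hT
  refine ⟨C, fun μ _ hμ => ?_⟩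
  have h_top := lintegral_heatPotential_rpow_ne_top hpq hq T hμ
  have h := hC μ
  rw [dualBesovNorm_eq_ofReal_sSup hpq hq hμ] at h
  have hq_inv := hpq.symm.inv_nonneg
  replace h := ENNReal.toReal_mono (by finiteness) h
  rwa [ENNReal.toReal_mul, ENNReal.coe_toReal,
    ENNReal.toReal_ofReal (sSup_dualSet_nonneg hpq hq hμ), ← ENNReal.toReal_rpow,
    ← integral_heatPotM_rpow_eq_toReal hpq.symm.pos h_top, ← one_div] at h

end EuclideanSpace

theorem stmt9_general (N : ℕ) (hN : 1 ≤ N) (q : ℝ) (hq2 : 2 < q) (T : ℝ) (hT : 0 < T) :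
    ∃ c : ℝ, 0 < c ∧
      ∀ μ : Measure (Euc N), IsFiniteMeasure μ → BddAbove (dualSet N q μ) →
        c⁻¹ * sSup (dualSet N q μ) ≤
            (∫ t in Set.Ioc (0 : ℝ) T, ∫ x, heatPotM N μ x t ^ q) ^ (1 / q) ∧
          (∫ t in Set.Ioc (0 : ℝ) T, ∫ x, heatPotM N μ x t ^ q) ^ (1 / q) ≤
            c * sSup (dualSet N q μ) := by
  have : NeZero N := ⟨by lia⟩
  have hpq := (HolderConjugate.conjExponent (show 1 < q by linarith)).symm
  obtain ⟨C₁, h_upper⟩ := exists_integral_heatPotM_rpow_le (N := N) hpq hq2 T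
  obtain ⟨C₂, h_lower⟩ := exists_sSup_dualSet_le (N := N) hpq hq2 hT
  refine ⟨C₁ + C₂ + 1, by positivity, fun μ _ hμ => ⟨?_, (h_upper μ hμ).trans ?_⟩⟩
  · rw [inv_mul_le_iff₀ (by positivity)]
    refine (h_lower μ hμ).trans (mul_le_mul_of_nonneg_right ?_
      (rpow_nonneg (integral_heatPotM_rpow_nonneg μ q T) _))
    linarith [C₁.2]
  · refine mul_le_mul_of_nonneg_right ?_ (sSup_dualSet_nonneg hpq hq2 hμ)
    linarith [C₂.2]

/-- Lemma 2.11: two-sided comparison of the dual Besov norm of a bounded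
positive measure with the `L^q(Q_T)` norm of its heat potential. -/
theorem stmt9 (N : ℕ) (hN : 1 ≤ N) (q : ℝ) (hq2 : 2 < q) (hqc : 1 + (N : ℝ) / 2 ≤ q)
    (T : ℝ) (hT : 0 < T) :
    ∃ c : ℝ, 0 < c ∧
      ∀ μ : Measure (Euc N), IsFiniteMeasure μ → BddAbove (dualSet N q μ) →
        c⁻¹ * sSup (dualSet N q μ) ≤
            (∫ t in Set.Ioc (0 : ℝ) T, ∫ x, heatPotM N μ x t ^ q) ^ (1 / q) ∧
          (∫ t in Set.Ioc (0 : ℝ) T, ∫ x, heatPotM N μ x t ^ q) ^ (1 / q) ≤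
            c * sSup (dualSet N q μ) :=
  stmt9_general N hN q hq2 T hT

end
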